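/- arXiv:1607.06962 — 2 statements merged into one kernel-verified Lean document; each statement's English description precedes it below -/
import Mathlib

section
/- Let W = F_{q^4} × F_{q^4} and let U, V be F_q-subspaces of W with dim_{F_q} U = dim_{F_q} V = 4, such that the maximum field of linearity of L_U is F_q (for every divisor e of 4 with e > 1 there is no F_{q^e}-subspace U' of W with L_{U'} = L_U). If L_U = L_V, then there exist a field automorphism σ of F_{q^4} and an invertible σ-semilinear map φ : W → W (an additive bijection with φ(cw) = σ(c)φ(w) for all c ∈ F_{q^4}, w ∈ W) such that φ(U) = V. In other words, every F_q-linear set of rank 4 of PG(1,q^4) with maximum field of linearity F_q is simple. -/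
/-- The `F_q`-linear set of PG(1,q^n) defined by a set `S ⊆ F × F`: the set of
one-dimensional `F`-subspaces spanned by the nonzero vectors of `S`. -/
def linSet (F : Type) [Field F] (S : Set (F × F)) : Set (Submodule F (F × F)) :=
  {X | ∃ u ∈ S, u ≠ 0 ∧ X = Submodule.span F {u}}

theorem exists_pow_eq_of_pow_eq_one {G : Type*} [Group G] [Finite G] [IsCyclic G] {m n : ℕ}
    (h : Nat.card G = m * n) {x : G} (hx : x ^ m = 1) : ∃ y : G, y ^ n = x := by
  obtain ⟨g, hg⟩ := IsCyclic.exists_generator (α := G)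
  obtain ⟨j, rfl⟩ := (Submonoid.mem_powers_iff _ _).1 (mem_powers_iff_mem_zpowers.2 (hg x))
  have hm : 0 < m := Nat.pos_of_ne_zero fun h0 => by
    have := Nat.card_pos (α := G)
    simp [h, h0] at this
  rw [← pow_mul, ← orderOf_dvd_iff_pow_eq_one, orderOf_eq_card_of_forall_mem_zpowers hg, h,
    mul_comm] at hx
  obtain ⟨i, rfl⟩ := Nat.dvd_of_mul_dvd_mul_right hm hx
  exact ⟨g ^ i, by rw [← pow_mul, mul_comm]⟩

section Frobenius

variable {K : Type*} [Field K] [Fintype K] {q : ℕ} {s : K →+* K}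

theorem map_four_eq_self (hK : Fintype.card K = q ^ 4) (hs : ∀ x, s x = x ^ q) (x : K) :
    s (s (s (s x))) = x := by
  simp only [hs, ← pow_mul]
  rw [show q * q * q * q = q ^ 4 by ring, ← hK, FiniteField.pow_card]

theorem exists_pow_eq_of_pow_eq_one₀ (hK : Fintype.card K = q ^ 4) {m n : ℕ}
    (hmn : q ^ 4 = m * n + 1) {x : K} (hx : x ^ m = 1) (hm : m ≠ 0) :
    ∃ y : K, y ≠ 0 ∧ y ^ n = x := by
  have hx0 : x ≠ 0 := by rintro rfl; simp [hm] at hx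
  obtain ⟨y, hy⟩ := exists_pow_eq_of_pow_eq_one (G := Kˣ) (m := m) (n := n)
    (by rw [Nat.card_units, Nat.card_eq_fintype_card]; omega) (x := Units.mk0 x hx0)
    (by ext; simpa using hx)
  exact ⟨y, y.ne_zero, by simpa using congrArg Units.val hy⟩

theorem exists_map_eq_mul_of_norm_eq_one (hK : Fintype.card K = q ^ 4) (hq : 2 ≤ q)
    (hs : ∀ x, s x = x ^ q) {x : K} (hx : x * s x * s (s x) * s (s (s x)) = 1) :
    ∃ y : K, y ≠ 0 ∧ s y = x * y := by
  obtain ⟨r, rfl⟩ : ∃ r, q = r + 1 := ⟨q - 1, by omega⟩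
  obtain ⟨y, hy, rfl⟩ := exists_pow_eq_of_pow_eq_one₀ hK
    (m := 1 + (r + 1) + (r + 1) ^ 2 + (r + 1) ^ 3) (n := r) (by ring) (x := x)
    (by rw [← hx]; simp only [hs]; ring) (by omega)
  exact ⟨y, hy, by rw [hs]; ring⟩

theorem exists_map_map_eq_mul_of_norm_eq_one (hK : Fintype.card K = q ^ 4) (hq : 2 ≤ q)
    (hs : ∀ x, s x = x ^ q) {x : K} (hx : x * s (s x) = 1) :
    ∃ y : K, y ≠ 0 ∧ s (s y) = x * y := by
  obtain ⟨r, rfl⟩ : ∃ r, q = r + 1 := ⟨q - 1, by omega⟩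
  obtain ⟨y, hy, rfl⟩ := exists_pow_eq_of_pow_eq_one₀ hK
    (m := 1 + (r + 1) ^ 2) (n := r * (r + 2)) (by ring) (x := x)
    (by rw [← hx]; simp only [hs]; ring) (by omega)
  exact ⟨y, hy, by simp only [hs]; ring⟩

theorem exists_map_eq_mul_of_mul_map_eq_one (hK : Fintype.card K = q ^ 4) (hq : 2 ≤ q)
    (hs : ∀ x, s x = x ^ q) {x : K} (hx : x * s x = 1) :
    ∃ y : K, y ≠ 0 ∧ s (s y) = y ∧ s y = x * y := by
  obtain ⟨r, rfl⟩ : ∃ r, q = r + 1 := ⟨q - 1, by omega⟩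
  obtain ⟨y, hy, rfl⟩ := exists_pow_eq_of_pow_eq_one₀ hK
    (m := 1 + (r + 1)) (n := r * (1 + (r + 1) ^ 2)) (by ring) (x := x)
    (by rw [← hx]; simp only [hs]; ring) (by omega)
  have h4 := map_four_eq_self hK hs y
  refine ⟨y * s (s y), mul_ne_zero hy (by simpa using hy), ?_, ?_⟩
  · simp only [map_mul, h4]; ring
  · simp only [hs]; ring

theorem exists_pow_ne_self (hK : Fintype.card K = q ^ 4) {n : ℕ} (hn : 0 < n)
    (hnq : n + 1 < q ^ 4) : ∃ x : K, x ≠ 0 ∧ x ^ n ≠ 1 := by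
  obtain ⟨g, hg⟩ := IsCyclic.exists_generator (α := Kˣ)
  refine ⟨g, g.ne_zero, fun h => ?_⟩
  have h1 : g ^ n = 1 := by ext; simpa using h
  rw [← orderOf_dvd_iff_pow_eq_one, orderOf_eq_card_of_forall_mem_zpowers hg, Nat.card_units,
    Nat.card_eq_fintype_card, hK] at h1
  have := Nat.le_of_dvd hn h1
  omega

theorem exists_map_map_eq_neg (hK : Fintype.card K = q ^ 4) (hq : 2 ≤ q)
    (hs : ∀ x, s x = x ^ q) : ∃ t : K, t ≠ 0 ∧ s (s t) = -t := by
  obtain ⟨r, rfl⟩ : ∃ r, q = r + 1 := ⟨q - 1, by omega⟩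
  obtain ⟨x, hx0, hx⟩ := exists_pow_ne_self (K := K) hK (n := r * (r + 2))
    (Nat.mul_pos (by omega) (by omega)) (by ring_nf; nlinarith [Nat.zero_le (r ^ 3), Nat.zero_le (r ^ 4)])
  refine ⟨s (s x) - x, fun h => hx ?_, ?_⟩
  · apply mul_left_cancel₀ hx0
    rw [sub_eq_zero] at h
    simp only [hs] at h
    rw [mul_one]
    nth_rw 3 [← h]
    ring
  · simp only [map_sub, map_four_eq_self hK hs]; ring

theorem exists_map_map_eq_self_map_ne (hK : Fintype.card K = q ^ 4) (hq : 2 ≤ q)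
    (hs : ∀ x, s x = x ^ q) : ∃ t : K, t ≠ 0 ∧ s (s t) = t ∧ s t ≠ t := by
  obtain ⟨r, rfl⟩ : ∃ r, q = r + 1 := ⟨q - 1, by omega⟩
  obtain ⟨x, hx0, hx⟩ := exists_pow_ne_self (K := K) hK (n := r * (1 + (r + 1) ^ 2))
    (Nat.mul_pos (by omega) (by positivity)) (by ring_nf; nlinarith [Nat.zero_le (r ^ 3), Nat.zero_le (r ^ 4)])
  have h0 : x * s (s x) ≠ 0 := mul_ne_zero hx0 (by simpa using hx0)
  refine ⟨x * s (s x), h0, ?_, fun h => hx ?_⟩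
  · simp only [map_mul, map_four_eq_self hK hs]; ring
  · apply mul_left_cancel₀ h0
    rw [mul_one]
    nth_rw 2 [← h]
    simp only [hs]
    ring

end Frobenius

section Adjoint

variable {K : Type*} [Field K] {s : K →+* K}

/-- The `q`-polynomial `a x^q + b x^(q^2) + c x^(q^3)`, where `s` is the `q`-Frobenius. -/
def qPoly (s : K →+* K) (a b c x : K) : K := a * s x + b * s (s x) + c * s (s (s x))

theorem qPoly_adjoint_apply (h4 : ∀ x, s (s (s (s x))) = x) {a b c u t : K}
    (ht : s (s t) = -t)
    (hu : u * s (s a) - s c * s (s (s u)) = s (s b) * c * t + s (s (s a)) * s b * s t) (x : K) :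
    qPoly s (s c) (s (s b)) (s (s (s a)))
        (s (s u) * s (s x) - t * s (s (qPoly s a b c x))) =
      (b * s (s b) * t + s (a * s (s a) - c * s (s c)) * s t) * s (s x)
        + u * s (s (qPoly s a b c x)) := by
  have hu' := congrArg s hu
  simp only [qPoly, map_add, map_sub, map_mul, map_neg, h4, ht] at hu' ⊢
  linear_combination (-s (s (s x))) * hu + s x * hu'

theorem exists_adjoint_coeffs [Fintype K] {q : ℕ} (hK : Fintype.card K = q ^ 4) (hq : 2 ≤ q)
    (hs : ∀ x, s x = x ^ q) {a c : K} (b : K) (hac : ¬(a = 0 ∧ c = 0)) :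
    ∃ u t : K, s (s t) = -t ∧
      u * s (s a) - s c * s (s (s u)) = s (s b) * c * t + s (s (s a)) * s b * s t ∧
      (b * s (s b) * t + s (a * s (s a) - c * s (s c)) * s t) * t + u * s (s u) ≠ 0 := by
  have h4 : ∀ x, s (s (s (s x))) = x := map_four_eq_self hK hs
  have h0 : ∀ {x}, s x = 0 ↔ x = 0 := fun {x} => map_eq_zero s
  by_cases hN : a * s a * s (s a) * s (s (s a)) = c * s c * s (s c) * s (s (s c))
  · have ha : a ≠ 0 := by
      rintro rfl
      simp only [map_zero, mul_zero] at hN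
      have : c = 0 := by simpa [h0] using hN.symm
      simp [this] at hac
    have hc : c ≠ 0 := by
      rintro rfl
      simp [h0, ha] at hN
    obtain ⟨y, hy, hy'⟩ := exists_map_eq_mul_of_norm_eq_one hK hq hs (x := s (s a) / s c) (by
      have hc1 : s c ≠ 0 := by simpa
      have hc2 : s (s c) ≠ 0 := by simpa
      have hc3 : s (s (s c)) ≠ 0 := by simpa
      simp only [map_div₀, h4]
      field_simp
      linear_combination hN)
    have hsy : s y ≠ 0 := by simpa
    have hsc : s c ≠ 0 := by simpa
    refine ⟨(s y)⁻¹, 0, by simp, ?_, ?_⟩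
    · simp only [map_inv₀, h4, map_zero]
      field_simp
      field_simp at hy'
      linear_combination -hy'
    · simp [hy]
  · have hinj : Function.Injective
        (AddMonoidHom.mk' (fun u : K => u * s (s a) - s c * s (s (s u)))
          (fun x y => by simp only [map_add]; ring)) := by
      rw [injective_iff_map_eq_zero]
      intro u hu
      simp only [AddMonoidHom.mk'_apply] at hu
      by_contra hu0
      apply hN
      have e0 : u * s (s a) = s c * s (s (s u)) := by linear_combination hu
      have e1 := congrArg s e0
      have e2 := congrArg s e1
      have e3 := congrArg s e2
      simp only [map_mul, h4] at e1 e2 e3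
      have hn : u * s u * s (s u) * s (s (s u)) ≠ 0 := by simp [hu0]
      apply mul_left_cancel₀ hn
      calc _ = (u * s (s a)) * (s u * s (s (s a))) * (s (s u) * a) * (s (s (s u)) * s a) := by ring
        _ = _ := by rw [e0, e1, e2, e3]; ring
    have hsurj := Finite.surjective_of_injective hinj
    obtain ⟨t, ht0, ht⟩ := exists_map_map_eq_neg (K := K) hK hq hs
    obtain ⟨k, hk0, hk, hk1⟩ := exists_map_map_eq_self_map_ne (K := K) hK hq hs
    obtain ⟨u, hu⟩ := hsurj (s (s b) * c * t + s (s (s a)) * s b * s t)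
    obtain ⟨v, hv⟩ := hsurj (s (s b) * c * (k * t) + s (s (s a)) * s b * s (k * t))
    simp only [AddMonoidHom.mk'_apply] at hu hv
    by_contra! hall
    have hkt : s (s (k * t)) = -(k * t) := by simp only [map_mul, ht, hk]; ring
    have d1 := hall u t ht hu
    have d2 := hall v (k * t) hkt hv
    have d3 := hall (u + v) (t + k * t) (by rw [map_add, map_add, ht, hkt]; ring)
      (by simp only [map_add]; linear_combination hu + hv)
    have hst : s t ≠ 0 := by simpa
    -- the two degenerate forms have the same kernel
    have huv : v = k * u := by
      have : (v - k * u) * s (s (v - k * u)) = 0 := by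
        simp only [map_add, map_sub, map_mul, hk] at d1 d2 d3 ⊢
        linear_combination (1 + k) * d2 + k * (k + 1) * d1 - k * d3
      rcases mul_eq_zero.1 this with h | h
      · linear_combination h
      · simp only [h0] at h
        linear_combination h
    subst huv
    have hD : s (a * s (s a) - c * s (s c)) = 0 := by
      have : s (a * s (s a) - c * s (s c)) * (s k - k) * (k * s t * t) = 0 := by
        simp only [map_mul, hk] at d1 d2 ⊢
        linear_combination d2 - k * k * d1
      simpa [hk0, ht0, hst, sub_eq_zero, hk1] using this
    rw [h0, sub_eq_zero] at hD
    apply hN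
    have hD' := congrArg s hD
    simp only [map_mul] at hD'
    calc _ = (a * s (s a)) * (s a * s (s (s a))) := by ring
      _ = _ := by rw [hD, hD']; ring

end Adjoint

section Orbit

variable {K : Type*} [Field K] {s : K →+* K} [Fintype K] {q : ℕ}

theorem exists_conj_of_products_eq (hK : Fintype.card K = q ^ 4) (hq : 2 ≤ q)
    (hs : ∀ x, s x = x ^ q) {a b c a' b' c' : K} (hac : ¬(a = 0 ∧ c = 0))
    (h1 : a * s c = a' * s c') (h2 : b * s (s b) = b' * s (s b'))
    (h3 : a * s a * s (s b) = a' * s a' * s (s b'))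
    (h3' : b * s c * s (s c) = b' * s c' * s (s c'))
    (hN : b = 0 → a * s a * s (s a) * s (s (s a)) = a' * s a' * s (s a') * s (s (s a')) ∧
      c * s c * s (s c) * s (s (s c)) = c' * s c' * s (s c') * s (s (s c'))) :
    ∃ y : K, y ≠ 0 ∧ a' * y = a * s y ∧ b' * y = b * s (s y) ∧ c' * y = c * s (s (s y)) := by
  have h4 : ∀ x, s (s (s (s x))) = x := map_four_eq_self hK hs
  have h0 : ∀ {x}, s x = 0 ↔ x = 0 := fun {x} => map_eq_zero s
  -- if `a ≠ 0`, the equation for `c` follows from the one for `a`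
  have key : ∀ y, y ≠ 0 → a ≠ 0 → a' * y = a * s y → c' * y = c * s (s (s y)) := by
    intro y hy ha h
    have hsy : s y ≠ 0 := by simpa
    have h5 : s c' * s y = s c * y := by
      apply mul_left_cancel₀ (mul_ne_zero ha hsy)
      linear_combination (-s c' * s y) * h - y * s y * h1
    have h6 := congrArg (fun z => s (s (s z))) h5
    simpa only [map_mul, h4] using h6
  have key' : ∀ y, y ≠ 0 → c ≠ 0 → c' * y = c * s (s (s y)) → a' * y = a * s y := by
    intro y hy hc h
    have hsc : s c ≠ 0 := by simpa
    have h5 := congrArg s h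
    simp only [map_mul, h4] at h5
    apply mul_left_cancel₀ hsc
    linear_combination (-a') * h5 - s y * h1
  by_cases hb : b = 0
  · obtain ⟨hNa, hNc⟩ := hN hb
    subst hb
    have hb' : b' = 0 := by simpa [h0] using h2.symm
    subst hb'
    by_cases ha : a = 0
    · have hc : c ≠ 0 := fun h => hac ⟨ha, h⟩
      have hc3 : s (s (s c)) ≠ 0 := by simpa
      obtain ⟨y, hy, h⟩ := exists_map_eq_mul_of_norm_eq_one hK hq hs (x := c' / c) (by
        have hc1 : s c ≠ 0 := by simpa
        have hc2 : s (s c) ≠ 0 := by simpa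
        simp only [map_div₀]
        field_simp
        linear_combination -hNc)
      have hy' : s y ≠ 0 := by simpa
      have hcy : c' * (s y)⁻¹ = c * s (s (s (s y)⁻¹)) := by
        rw [map_inv₀, map_inv₀, map_inv₀, h4]
        field_simp at h ⊢
        linear_combination -h
      exact ⟨(s y)⁻¹, inv_ne_zero hy', key' _ (inv_ne_zero hy') hc hcy, by simp, hcy⟩
    · obtain ⟨y, hy, h⟩ := exists_map_eq_mul_of_norm_eq_one hK hq hs (x := a' / a) (by
        have ha1 : s a ≠ 0 := by simpa
        have ha2 : s (s a) ≠ 0 := by simpa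
        have ha3 : s (s (s a)) ≠ 0 := by simpa
        simp only [map_div₀]
        field_simp
        linear_combination -hNa)
      have hay : a' * y = a * s y := by rw [h]; field_simp
      exact ⟨y, hy, hay, by simp, key y hy ha hay⟩
  · have hsb : s (s b) ≠ 0 := by simpa
    have hbb : b' * s (s b') ≠ 0 := by rw [← h2]; exact mul_ne_zero hb hsb
    have hb' : b' ≠ 0 := left_ne_zero_of_mul hbb
    have hsb' : s (s b') ≠ 0 := right_ne_zero_of_mul hbb
    obtain ⟨m, hm, hmb⟩ := exists_map_map_eq_mul_of_norm_eq_one hK hq hs (x := b' / b) (by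
      simp only [map_div₀]
      field_simp
      linear_combination -h2)
    have hbm : b' * m = b * s (s m) := by rw [hmb]; field_simp
    have hm1 : s m ≠ 0 := by simpa
    have hm2 : s (s m) ≠ 0 := by simpa
    have hm3 : s (s (s m)) ≠ 0 := by simpa
    have hbm' := congrArg (fun z => s (s z)) hbm
    simp only [map_mul, h4] at hbm'
    by_cases ha : a = 0
    · have hc : c ≠ 0 := fun h => hac ⟨ha, h⟩
      have hc1 : s c ≠ 0 := by simpa
      obtain ⟨n, hn, hn2, h⟩ := exists_map_eq_mul_of_mul_map_eq_one hK hq hs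
        (x := c' * m / (c * s (s (s m)))) (by
          have : s (c' * m / (c * s (s (s m)))) * s (s (c' * m / (c * s (s (s m))))) = 1 := by
            have hc2 : s (s c) ≠ 0 := by simpa
            simp only [map_div₀, map_mul, h4]
            field_simp
            apply mul_left_cancel₀ hb'
            linear_combination (-s (s m)) * h3' - s c * s (s c) * hbm
          have := congrArg (fun z => s (s (s z))) this
          simpa only [map_mul, h4, map_one] using this)
      have hcy : c' * (m * n) = c * s (s (s (m * n))) := by
        rw [map_mul, map_mul, map_mul, hn2, h]; field_simp
      refine ⟨m * n, mul_ne_zero hm hn, key' _ (mul_ne_zero hm hn) hc hcy, ?_, hcy⟩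
      rw [map_mul, map_mul, hn2]; linear_combination n * hbm
    · have ha1 : s a ≠ 0 := by simpa
      obtain ⟨n, hn, hn2, h⟩ := exists_map_eq_mul_of_mul_map_eq_one hK hq hs
        (x := a' * m / (a * s m)) (by
          simp only [map_div₀, map_mul]
          field_simp
          apply mul_left_cancel₀ hsb'
          linear_combination (-m) * h3 - a * s a * hbm')
      have hay : a' * (m * n) = a * s (m * n) := by
        rw [map_mul, h]; field_simp
      refine ⟨m * n, mul_ne_zero hm hn, hay, ?_, key _ (mul_ne_zero hm hn) ha hay⟩
      rw [map_mul, map_mul, hn2]; linear_combination n * hbm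

theorem eq_or_eq_of_add_eq_of_mul_eq {R : Type*} [CommRing R] [IsDomain R] {x y z w : R}
    (h : x + y = z + w) (h' : x * y = z * w) : (x = z ∧ y = w) ∨ (x = w ∧ y = z) := by
  have : (x - z) * (x - w) = 0 := by linear_combination x * h - h'
  rcases mul_eq_zero.1 this with e | e
  · exact Or.inl ⟨by linear_combination e, by linear_combination h - e⟩
  · exact Or.inr ⟨by linear_combination e, by linear_combination h - e⟩

theorem exists_conj_or_conj_adjoint (hK : Fintype.card K = q ^ 4) (hq : 2 ≤ q)
    (hs : ∀ x, s x = x ^ q) {a b c a' b' c' : K} (hac : ¬(a = 0 ∧ c = 0))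
    (h1 : a * s c = a' * s c') (h2 : b * s (s b) = b' * s (s b'))
    (h3 : a * s a * s (s b) + b * s c * s (s c) = a' * s a' * s (s b') + b' * s c' * s (s c'))
    (hN : b = 0 → b' = 0 →
      a * s a * s (s a) * s (s (s a)) + c * s c * s (s c) * s (s (s c)) =
        a' * s a' * s (s a') * s (s (s a')) + c' * s c' * s (s c') * s (s (s c'))) :
    (∃ y : K, y ≠ 0 ∧ a' * y = a * s y ∧ b' * y = b * s (s y) ∧ c' * y = c * s (s (s y))) ∨
    (∃ y : K, y ≠ 0 ∧ a' * y = s c * s y ∧ b' * y = s (s b) * s (s y) ∧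
      c' * y = s (s (s a)) * s (s (s y))) := by
  have h4 : ∀ x, s (s (s (s x))) = x := map_four_eq_self hK hs
  have h1' := congrArg s h1
  have h1'' := congrArg s h1'
  have h1''' := congrArg s h1''
  simp only [map_mul, h4] at h1' h1'' h1'''
  have hac' : ¬(s c = 0 ∧ s (s (s a)) = 0) := by simpa [and_comm] using hac
  by_cases hb : b = 0
  · subst hb
    have hb' : b' = 0 := by simpa using h2.symm
    subst hb'
    rcases eq_or_eq_of_add_eq_of_mul_eq (hN rfl rfl) (by
      calc _ = (a * s c) * (s a * s (s c)) * (s (s a) * s (s (s c))) * (s (s (s a)) * c) := by ring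
        _ = _ := by rw [h1, h1', h1'', h1''']; ring) with ⟨e1, e2⟩ | ⟨e1, e2⟩
    · exact Or.inl (exists_conj_of_products_eq hK hq hs hac h1 h2 (by simp) (by simp)
        fun _ => ⟨e1, e2⟩)
    · refine Or.inr (exists_conj_of_products_eq hK hq hs hac' ?_ (by simp) (by simp) (by simp)
        fun _ => ⟨?_, ?_⟩)
      · rw [h4, mul_comm, h1]
      · rw [h4, ← e2]; ring
      · simp only [h4]; rw [← e1]; ring
  · rcases eq_or_eq_of_add_eq_of_mul_eq h3 (by
      calc _ = (a * s c) * (s a * s (s c)) * (b * s (s b)) := by ring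
        _ = _ := by rw [h1, h1', h2]; ring) with ⟨e1, e2⟩ | ⟨e1, e2⟩
    · exact Or.inl (exists_conj_of_products_eq hK hq hs hac h1 h2 e1 e2 fun h => absurd h hb)
    · refine Or.inr (exists_conj_of_products_eq hK hq hs hac' ?_ ?_ ?_ ?_
        fun h => absurd (by simpa using h) hb)
      · rw [h4, mul_comm, h1]
      · rw [h4, mul_comm, h2]
      · rw [h4, ← e2]; ring
      · simp only [h4]; rw [← e1]; ring

end Orbit

section PowerSums

/-- The values `q ^ i + q ^ j + q ^ k + q ^ l` modulo `q ^ 4 - 1` determine whether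
`i, j, k, l` are the four exponents `0, 1, 2, 3` in some order. -/
theorem forall_count_eq_one_of_modEq {q : ℕ} (hq : 2 ≤ q) (i j k l : Fin 4)
    (h : q ^ (i : ℕ) + q ^ (j : ℕ) + q ^ (k : ℕ) + q ^ (l : ℕ) ≡ 1 + q + q ^ 2 + q ^ 3
      [MOD q ^ 4 - 1]) (r : Fin 4) :
    (if i = r then 1 else 0) + (if j = r then 1 else 0) + (if k = r then 1 else 0)
      + (if l = r then 1 else 0) = 1 := by
  by_cases h5 : q < 5
  · interval_cases q <;> revert i j k l r <;> decide
  · have hpow : ∀ i : Fin 4, q ^ (i : ℕ) = (if i = 0 then 1 else 0) + (if i = 1 then 1 else 0) * q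
        + (if i = 2 then 1 else 0) * q ^ 2 + (if i = 3 then 1 else 0) * q ^ 3 := by
      intro i; fin_cases i <;> simp
    have hle : ∀ i : Fin 4, q ^ (i : ℕ) ≤ q ^ 3 := fun i =>
      Nat.pow_le_pow_right (by omega) (by omega)
    have h4 : q ^ 4 = q * q ^ 3 := by ring
    have h3 : 0 < q ^ 3 := by positivity
    have h53 : 5 * q ^ 3 ≤ q * q ^ 3 := Nat.mul_le_mul_right _ (by omega)
    have h31 : 1 < q ^ 3 := Nat.one_lt_pow (by omega) (by omega)
    have e := Nat.ModEq.eq_of_lt_of_lt h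
      (by have := hle i; have := hle j; have := hle k; have := hle l; omega)
      (by have := hle 0; have := hle 1; have := hle 2; simp at *; omega)
    rw [hpow i, hpow j, hpow k, hpow l] at e
    obtain ⟨n, hn⟩ : ∃ n : Fin 4 → ℕ, ∀ r, n r = (if i = r then 1 else 0)
      + (if j = r then 1 else 0) + (if k = r then 1 else 0) + (if l = r then 1 else 0) :=
      ⟨_, fun r => rfl⟩
    have hn4 : ∀ r, n r < q := fun r => by rw [hn]; split_ifs <;> omega
    have digit : ∀ x y m : ℕ, m < q → m + q * x = 1 + q * y → m = 1 ∧ x = y := by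
      intro x y m hm hxy
      have := congrArg (· % q) hxy
      simp only [Nat.add_mul_mod_self_left, Nat.mod_eq_of_lt hm,
        Nat.mod_eq_of_lt (show 1 < q by omega)] at this
      subst this
      exact ⟨rfl, Nat.eq_of_mul_eq_mul_left (by omega) (Nat.add_left_cancel hxy)⟩
    have e' : n 0 + q * (n 1 + q * (n 2 + q * n 3)) = 1 + q * (1 + q * (1 + q * 1)) := by
      simp only [hn]; linarith
    obtain ⟨e0, e'⟩ := digit _ _ _ (hn4 0) e'
    obtain ⟨e1, e'⟩ := digit _ _ _ (hn4 1) e'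
    obtain ⟨e2, e3⟩ := digit _ _ _ (hn4 2) e'
    rw [← hn]
    fin_cases r <;> assumption

variable {K : Type*} [Field K] [Fintype K] [DecidableEq K] {q : ℕ}

theorem sum_units_pow_mul_inv_pow (hK : Fintype.card K = q ^ 4) (hq : 2 ≤ q) (i j k l : Fin 4) :
    ∑ x : Kˣ, ((x : K) ^ (q ^ (i : ℕ)) * (x : K) ^ (q ^ (j : ℕ)) * (x : K) ^ (q ^ (k : ℕ))
      * (x : K) ^ (q ^ (l : ℕ))) * ((x : K)⁻¹) ^ (1 + q + q ^ 2 + q ^ 3) =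
    if ∀ r : Fin 4, (if i = r then 1 else 0) + (if j = r then 1 else 0) + (if k = r then 1 else 0)
      + (if l = r then 1 else 0) = 1 then -1 else 0 := by
  have h4 : 1 < q ^ 4 := Nat.one_lt_pow (by omega) (by omega)
  have hinv : ∀ x : Kˣ, (x : K)⁻¹ = (x : K) ^ (q ^ 4 - 2) := by
    intro x
    have h := FiniteField.pow_card_sub_one_eq_one (x : K) x.ne_zero
    rw [hK] at h
    apply inv_eq_of_mul_eq_one_right
    rw [← pow_succ', ← h]
    congr 1; omega
  have hsum := FiniteField.sum_pow_units K (q ^ (i : ℕ) + q ^ (j : ℕ) + q ^ (k : ℕ) + q ^ (l : ℕ)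
    + (q ^ 4 - 2) * (1 + q + q ^ 2 + q ^ 3))
  rw [hK] at hsum
  have hiff : (q ^ 4 - 1 ∣ q ^ (i : ℕ) + q ^ (j : ℕ) + q ^ (k : ℕ) + q ^ (l : ℕ)
      + (q ^ 4 - 2) * (1 + q + q ^ 2 + q ^ 3)) ↔
      ∀ r : Fin 4, (if i = r then 1 else 0) + (if j = r then 1 else 0) + (if k = r then 1 else 0)
      + (if l = r then 1 else 0) = 1 := by
    obtain ⟨m, hm⟩ : ∃ m, q ^ 4 = m + 2 := ⟨q ^ 4 - 2, by omega⟩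
    constructor
    · intro hd r
      refine forall_count_eq_one_of_modEq hq i j k l ?_ r
      rw [← Nat.modEq_zero_iff_dvd] at hd
      apply Nat.ModEq.add_right_cancel' ((q ^ 4 - 2) * (1 + q + q ^ 2 + q ^ 3))
      refine hd.trans ((Nat.modEq_zero_iff_dvd.2 ⟨1 + q + q ^ 2 + q ^ 3, ?_⟩).symm)
      rw [hm]; simp only [Nat.add_sub_cancel, show m + 2 - 1 = m + 1 by omega]; ring
    · intro hr
      have hpow : ∀ i : Fin 4, q ^ (i : ℕ) = (if i = 0 then 1 else 0)
          + (if i = 1 then 1 else 0) * q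
          + (if i = 2 then 1 else 0) * q ^ 2 + (if i = 3 then 1 else 0) * q ^ 3 := by
        intro i; fin_cases i <;> simp
      have e : q ^ (i : ℕ) + q ^ (j : ℕ) + q ^ (k : ℕ) + q ^ (l : ℕ) = 1 + q + q ^ 2 + q ^ 3 := by
        rw [hpow i, hpow j, hpow k, hpow l]
        linear_combination hr 0 + q * hr 1 + q ^ 2 * hr 2 + q ^ 3 * hr 3
      rw [e]
      refine ⟨1 + q + q ^ 2 + q ^ 3, ?_⟩
      rw [hm]; simp only [Nat.add_sub_cancel, show m + 2 - 1 = m + 1 by omega]; ring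
  simp only [hiff] at hsum
  rw [← hsum]
  refine Finset.sum_congr rfl fun x _ => ?_
  rw [hinv]; ring

/-- The power sum of a product of four `q`-polynomial quotients is minus the permanent of the
matrix of coefficients. -/
theorem sum_units_prod_qPoly (hK : Fintype.card K = q ^ 4) (hq : 2 ≤ q)
    (A B C D : Fin 4 → K) :
    ∑ x : Kˣ, ((∑ i, A i * (x : K) ^ (q ^ (i : ℕ))) * (∑ i, B i * (x : K) ^ (q ^ (i : ℕ)))
      * (∑ i, C i * (x : K) ^ (q ^ (i : ℕ))) * (∑ i, D i * (x : K) ^ (q ^ (i : ℕ))))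
      * ((x : K)⁻¹) ^ (1 + q + q ^ 2 + q ^ 3) =
    -∑ i, ∑ j, ∑ k, ∑ l, if ∀ r : Fin 4, (if i = r then 1 else 0) + (if j = r then 1 else 0)
      + (if k = r then 1 else 0) + (if l = r then 1 else 0) = 1 then A i * B j * C k * D l else 0 := by
  have : ∀ i j k l : Fin 4, -(if ∀ r : Fin 4, (if i = r then 1 else 0) + (if j = r then 1 else 0)
      + (if k = r then 1 else 0) + (if l = r then 1 else 0) = 1 then A i * B j * C k * D l else 0)
      = ∑ x : Kˣ, A i * B j * C k * D l * (((x : K) ^ (q ^ (i : ℕ)) * (x : K) ^ (q ^ (j : ℕ))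
      * (x : K) ^ (q ^ (k : ℕ)) * (x : K) ^ (q ^ (l : ℕ)))
      * ((x : K)⁻¹) ^ (1 + q + q ^ 2 + q ^ 3)) := by
    intro i j k l
    rw [← Finset.mul_sum, sum_units_pow_mul_inv_pow hK hq]
    split_ifs <;> simp
  simp only [← Finset.sum_neg_distrib, this]
  simp only [Finset.sum_comm (s := (Finset.univ : Finset (Fin 4))) (t := (Finset.univ : Finset Kˣ))]
  refine Finset.sum_congr rfl fun x _ => ?_
  simp only [Finset.sum_mul, Finset.mul_sum]
  simp only [Fin.sum_univ_four]
  ring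

end PowerSums

section Slopes

variable {K : Type*} [Field K] [Fintype K] [DecidableEq K]

theorem card_units_apply_mul_inv_eq (f : K →+ K) (m : K) :
    ((Finset.univ.filter fun x : Kˣ => f x * (x : K)⁻¹ = m).card : K) =
      if ∃ x : K, x ≠ 0 ∧ f x = m * x then -1 else 0 := by
  split_ifs with h
  · obtain ⟨y, hy, hfy⟩ := h
    let H : AddSubgroup K := (f - AddMonoidHom.mulLeft m).ker
    have hH : ∀ x, x ∈ H ↔ f x = m * x := fun x => by
      simp [H, AddMonoidHom.mem_ker, sub_eq_zero]
    have hcard : Nat.card H =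
        (Finset.univ.filter fun x : Kˣ => f x * (x : K)⁻¹ = m).card + 1 := by
      have e : (Finset.univ.filter fun x : K => f x = m * x) =
          insert 0 ((Finset.univ.filter fun x : Kˣ => f x * (x : K)⁻¹ = m).map
            ⟨Units.val, Units.val_injective⟩) := by
        ext x
        simp only [Finset.mem_filter, Finset.mem_univ, true_and, Finset.mem_insert,
          Finset.mem_map, Function.Embedding.coeFn_mk]
        constructor
        · intro hx
          by_cases hx0 : x = 0
          · exact Or.inl hx0
          · exact Or.inr ⟨Units.mk0 x hx0, by simp [hx, hx0], rfl⟩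
        · rintro (rfl | ⟨x, hx, rfl⟩)
          · simp
          · rw [← hx]; simp
      rw [← Finset.card_map ⟨Units.val, Units.val_injective⟩, ← Finset.card_insert_of_notMem,
        ← e]
      · exact Nat.subtype_card _ fun x => by simp [hH]
      · simp
    have h0 : ((Nat.card H : ℕ) : K) * y = 0 := by
      have := congrArg Subtype.val (card_nsmul_eq_zero' (x := (⟨y, (hH y).2 hfy⟩ : H)))
      rwa [AddSubgroup.coe_nsmul, nsmul_eq_mul] at this
    rw [hcard] at h0
    have := (mul_eq_zero.1 h0).resolve_right hy
    push_cast at this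
    linear_combination this
  · rw [Finset.filter_eq_empty_iff.2, Finset.card_empty, Nat.cast_zero]
    intro x _ hx
    exact h ⟨x, x.ne_zero, by rw [← hx]; simp⟩

theorem sum_units_apply_mul_inv_eq {f g : K →+ K}
    (h : ∀ m, (∃ x : K, x ≠ 0 ∧ f x = m * x) ↔ ∃ x : K, x ≠ 0 ∧ g x = m * x) (F : K → K) :
    ∑ x : Kˣ, F (f x * (x : K)⁻¹) = ∑ x : Kˣ, F (g x * (x : K)⁻¹) := by
  have key : ∀ f : K →+ K, ∑ x : Kˣ, F (f x * (x : K)⁻¹) =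
      ∑ m : K, (if ∃ x : K, x ≠ 0 ∧ f x = m * x then -1 else 0) * F m := by
    intro f
    rw [← Finset.sum_fiberwise Finset.univ (fun x : Kˣ => f x * (x : K)⁻¹)]
    refine Finset.sum_congr rfl fun m _ => ?_
    rw [← card_units_apply_mul_inv_eq, ← nsmul_eq_mul, ← Finset.sum_const]
    exact Finset.sum_congr rfl fun x hx => by rw [(Finset.mem_filter.1 hx).2]
  simp only [key, h]

end Slopes

section Invariants

theorem sum_ite_count_eq_one {R : Type*} [CommRing R] (A B C D : Fin 4 → R) :
    (∑ i, ∑ j, ∑ k, ∑ l, if ∀ r : Fin 4, (if i = r then 1 else 0) + (if j = r then 1 else 0)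
      + (if k = r then 1 else 0) + (if l = r then 1 else 0) = 1
      then A i * B j * C k * D l else 0) =
    A 0 * (B 1 * (C 2 * D 3 + C 3 * D 2) + B 2 * (C 1 * D 3 + C 3 * D 1)
      + B 3 * (C 1 * D 2 + C 2 * D 1)) +
    A 1 * (B 0 * (C 2 * D 3 + C 3 * D 2) + B 2 * (C 0 * D 3 + C 3 * D 0)
      + B 3 * (C 0 * D 2 + C 2 * D 0)) +
    A 2 * (B 0 * (C 1 * D 3 + C 3 * D 1) + B 1 * (C 0 * D 3 + C 3 * D 0)
      + B 3 * (C 0 * D 1 + C 1 * D 0)) +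
    A 3 * (B 0 * (C 1 * D 2 + C 2 * D 1) + B 1 * (C 0 * D 2 + C 2 * D 0)
      + B 2 * (C 0 * D 1 + C 1 * D 0)) := by
  simp +decide only [Fin.sum_univ_four, if_true, if_false]
  ring

variable {K : Type*} [Field K] [Fintype K] [DecidableEq K] {q : ℕ} {s : K →+* K}

theorem qPoly_invariants (hK : Fintype.card K = q ^ 4) (hq : 2 ≤ q) (hs : ∀ x, s x = x ^ q)
    {f g : K →+ K} {d a b c d' a' b' c' : K}
    (hf : ∀ x, f x = d * x + qPoly s a b c x) (hg : ∀ x, g x = d' * x + qPoly s a' b' c' x)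
    (h : ∀ m, (∃ x : K, x ≠ 0 ∧ f x = m * x) ↔ ∃ x : K, x ≠ 0 ∧ g x = m * x) :
    d = d' ∧ (d = 0 → a * s c = a' * s c' ∧ b * s (s b) = b' * s (s b') ∧
      a * s a * s (s b) + b * s c * s (s c) = a' * s a' * s (s b') + b' * s c' * s (s c') ∧
      (b = 0 → b' = 0 →
        a * s a * s (s a) * s (s (s a)) + c * s c * s (s c) * s (s (s c))
          + (a * s c) * s (s (a * s c)) + s (a * s c) * s (s (s (a * s c))) =
        a' * s a' * s (s a') * s (s (s a')) + c' * s c' * s (s c') * s (s (s c'))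
          + (a' * s c') * s (s (a' * s c')) + s (a' * s c') * s (s (s (a' * s c'))))) := by
  have h4 : ∀ x, s (s (s (s x))) = x := map_four_eq_self hK hs
  have hs2 : ∀ x : K, x ^ q ^ 2 = s (s x) := fun x => by rw [hs, hs, ← pow_mul]; ring_nf
  have hs3 : ∀ x : K, x ^ q ^ 3 = s (s (s x)) := fun x => by
    rw [hs, hs, hs, ← pow_mul, ← pow_mul]; ring_nf
  have hinv : ∀ x : K, x⁻¹ ^ (1 + q + q ^ 2 + q ^ 3) =
      x⁻¹ * (s x)⁻¹ * (s (s x))⁻¹ * (s (s (s x)))⁻¹ := fun x => by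
    simp only [pow_add, pow_one, hs2, hs3, ← hs, map_inv₀]
  have sum_one : ∀ (f : K →+ K) (d a b c : K), (∀ x, f x = d * x + qPoly s a b c x) →
      ∑ x : Kˣ, (fun y => y) (f x * (x : K)⁻¹) = -d := by
    intro f d a b c hf
    have := sum_units_prod_qPoly hK hq ![d, a, b, c] ![0, 1, 0, 0] ![0, 0, 1, 0] ![0, 0, 0, 1]
    rw [sum_ite_count_eq_one] at this
    simp [Fin.sum_univ_four] at this
    rw [← this]
    refine Finset.sum_congr rfl fun x _ => ?_
    have hx := x.ne_zero
    simp only [hf, qPoly, hs]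
    field_simp
    ring
  have hd : d = d' := by
    have := sum_units_apply_mul_inv_eq h (fun y => y)
    rwa [sum_one f d a b c hf, sum_one g d' a' b' c' hg, neg_inj] at this
  refine ⟨hd, ?_⟩
  rintro rfl
  subst hd
  have sum_two : ∀ (f : K →+ K) (a b c : K), (∀ x, f x = 0 * x + qPoly s a b c x) →
      ∑ x : Kˣ, (fun y => y * s y) (f x * (x : K)⁻¹) = -(a * s c) := by
    intro f a b c hf
    have := sum_units_prod_qPoly hK hq ![0, a, b, c] ![s c, 0, s a, s b] ![0, 0, 1, 0] ![0, 0, 0, 1]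
    rw [sum_ite_count_eq_one] at this
    simp [Fin.sum_univ_four, hs2, hs3, ← hs, hinv] at this
    rw [← this]
    refine Finset.sum_congr rfl fun x _ => ?_
    have hx := x.ne_zero
    have hx1 : s x ≠ 0 := by simp
    have hx2 : s (s x) ≠ 0 := by simp
    have hx3 : s (s (s x)) ≠ 0 := by simp
    simp only [hf, qPoly, map_mul, map_add, map_inv₀, map_zero, h4]
    field_simp
    ring
  have sum_two' : ∀ (f : K →+ K) (a b c : K), (∀ x, f x = 0 * x + qPoly s a b c x) →
      ∑ x : Kˣ, (fun y => y * s (s y)) (f x * (x : K)⁻¹) = -(b * s (s b)) := by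
    intro f a b c hf
    have := sum_units_prod_qPoly hK hq ![0, a, b, c] ![0, 1, 0, 0]
      ![s (s b), s (s c), 0, s (s a)] ![0, 0, 0, 1]
    rw [sum_ite_count_eq_one] at this
    simp [Fin.sum_univ_four, hs2, hs3, ← hs, hinv] at this
    rw [← this]
    refine Finset.sum_congr rfl fun x _ => ?_
    have hx := x.ne_zero
    have hx1 : s x ≠ 0 := by simp
    have hx2 : s (s x) ≠ 0 := by simp
    have hx3 : s (s (s x)) ≠ 0 := by simp
    simp only [hf, qPoly, map_mul, map_add, map_inv₀, map_zero, h4]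
    field_simp
    ring
  have sum_three : ∀ (f : K →+ K) (a b c : K), (∀ x, f x = 0 * x + qPoly s a b c x) →
      ∑ x : Kˣ, (fun y => y * s y * s (s y)) (f x * (x : K)⁻¹) =
        -(a * s a * s (s b) + b * s c * s (s c)) := by
    intro f a b c hf
    have := sum_units_prod_qPoly hK hq ![0, a, b, c] ![s c, 0, s a, s b]
      ![s (s b), s (s c), 0, s (s a)] ![0, 0, 0, 1]
    rw [sum_ite_count_eq_one] at this
    simp [Fin.sum_univ_four, hs2, hs3, ← hs, hinv] at this
    rw [show -(a * s a * s (s b) + b * s c * s (s c)) =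
      -(b * (s c * s (s c))) + -(a * (s a * s (s b))) by ring, ← this]
    refine Finset.sum_congr rfl fun x _ => ?_
    have hx := x.ne_zero
    have hx1 : s x ≠ 0 := by simp
    have hx2 : s (s x) ≠ 0 := by simp
    have hx3 : s (s (s x)) ≠ 0 := by simp
    simp only [hf, qPoly, map_mul, map_add, map_inv₀, map_zero, h4]
    field_simp
    ring
  have sum_four : ∀ (f : K →+ K) (a c : K), (∀ x, f x = 0 * x + qPoly s a 0 c x) →
      ∑ x : Kˣ, (fun y => y * s y * s (s y) * s (s (s y))) (f x * (x : K)⁻¹) =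
        -(a * s a * s (s a) * s (s (s a)) + c * s c * s (s c) * s (s (s c))
          + (a * s c) * s (s (a * s c)) + s (a * s c) * s (s (s (a * s c)))) := by
    intro f a c hf
    have := sum_units_prod_qPoly hK hq ![0, a, 0, c] ![s c, 0, s a, 0]
      ![0, s (s c), 0, s (s a)] ![s (s (s a)), 0, s (s (s c)), 0]
    rw [sum_ite_count_eq_one] at this
    simp only [Fin.sum_univ_four, hinv] at this
    simp [hs2, hs3, ← hs] at this
    simp only [map_mul, h4]
    trans
    swap
    · convert this using 1
      ring
    refine Finset.sum_congr rfl fun x _ => ?_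
    have hx := x.ne_zero
    have hx1 : s x ≠ 0 := by simp
    have hx2 : s (s x) ≠ 0 := by simp
    have hx3 : s (s (s x)) ≠ 0 := by simp
    simp only [hf, qPoly, map_mul, map_add, map_inv₀, map_zero, h4]
    field_simp
    ring
  refine ⟨?_, ?_, ?_, ?_⟩
  · have := sum_units_apply_mul_inv_eq h (fun y => y * s y)
    rwa [sum_two f a b c hf, sum_two g a' b' c' hg, neg_inj] at this
  · have := sum_units_apply_mul_inv_eq h (fun y => y * s (s y))
    rwa [sum_two' f a b c hf, sum_two' g a' b' c' hg, neg_inj] at this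
  · have := sum_units_apply_mul_inv_eq h (fun y => y * s y * s (s y))
    rwa [sum_three f a b c hf, sum_three g a' b' c' hg, neg_inj] at this
  · rintro rfl rfl
    have := sum_units_apply_mul_inv_eq h (fun y => y * s y * s (s y) * s (s (s y)))
    rwa [sum_four f a c hf, sum_four g a' c' hg, neg_inj] at this

end Invariants

section SemilinearEquivalence

variable {F : Type} [Field F]

/-- Two sets of vectors of `F × F` correspond under an invertible semilinear map. -/
def SemilinearEquivalent (S T : Set (F × F)) : Prop :=
  ∃ (σ : F ≃+* F) (φ : (F × F) ≃+ (F × F)),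
    (∀ (c : F) (w : F × F), φ (c • w) = σ c • φ w) ∧ φ '' S = T

theorem SemilinearEquivalent.symm {S T : Set (F × F)} (h : SemilinearEquivalent S T) :
    SemilinearEquivalent T S := by
  obtain ⟨σ, φ, h, rfl⟩ := h
  refine ⟨σ.symm, φ.symm, fun c w => ?_, ?_⟩
  · rw [AddEquiv.symm_apply_eq, h, RingEquiv.apply_symm_apply, AddEquiv.apply_symm_apply]
  · rw [← Set.image_comp]; simp

theorem SemilinearEquivalent.trans {S T R : Set (F × F)} (h : SemilinearEquivalent S T)
    (h' : SemilinearEquivalent T R) : SemilinearEquivalent S R := by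
  obtain ⟨σ, φ, h, rfl⟩ := h
  obtain ⟨τ, ψ, h', rfl⟩ := h'
  refine ⟨σ.trans τ, φ.trans ψ, fun c w => by simp [h, h'], ?_⟩
  rw [← Set.image_comp]; rfl

theorem SemilinearEquivalent.of_matrix [Finite F] (τ : F →+* F) {α β γ δ : F}
    (hdet : α * δ - β * γ ≠ 0) {S T : Set (F × F)} (hcard : T.ncard ≤ S.ncard)
    (hST : ∀ w ∈ S, (α * τ w.1 + β * τ w.2, γ * τ w.1 + δ * τ w.2) ∈ T) :
    SemilinearEquivalent S T := by
  let f : F × F →+ F × F := AddMonoidHom.mk'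
    (fun w => (α * τ w.1 + β * τ w.2, γ * τ w.1 + δ * τ w.2)) (fun x y => by
      ext <;> simp <;> ring)
  have hf : Function.Bijective f := by
    rw [← Finite.injective_iff_bijective, injective_iff_map_eq_zero]
    rintro ⟨x, y⟩ h
    simp only [f, AddMonoidHom.mk'_apply, Prod.mk_eq_zero] at h
    have hx : (α * δ - β * γ) * τ x = 0 := by linear_combination δ * h.1 - β * h.2
    have hy : (α * δ - β * γ) * τ y = 0 := by linear_combination α * h.2 - γ * h.1
    simpa [hdet] using And.intro hx hy
  refine ⟨RingEquiv.ofBijective τ (Finite.injective_iff_bijective.1 τ.injective),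
    AddEquiv.ofBijective f hf, fun c w => ?_, ?_⟩
  · ext <;> simp [f] <;> ring
  · refine Set.eq_of_subset_of_ncard_le ?_ ?_
    · rintro _ ⟨w, hw, rfl⟩
      exact hST w hw
    · rwa [Set.ncard_image_of_injective _ (AddEquiv.injective _)]

theorem ncard_setOf_snd_eq {α : Type*} (f : α → α) :
    {w : α × α | w.2 = f w.1}.ncard = Nat.card α := by
  rw [← Nat.card_coe_set_eq]
  exact Nat.card_congr ⟨fun w => w.1.1, fun x => ⟨(x, f x), rfl⟩,
    fun ⟨⟨x, y⟩, h⟩ => by simpa using h.symm, fun x => rfl⟩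

end SemilinearEquivalence

section Graph

variable {F : Type} [Field F] [Fintype F] {q : ℕ} {s : F →+* F}

theorem semilinearEquivalent_graph_of_conj {a b c a' b' c' y : F} (hy : y ≠ 0)
    (ha : a' * y = a * s y) (hb : b' * y = b * s (s y)) (hc : c' * y = c * s (s (s y))) :
    SemilinearEquivalent {w : F × F | w.2 = qPoly s a b c w.1}
      {w : F × F | w.2 = qPoly s a' b' c' w.1} := by
  refine .of_matrix (RingHom.id F) (α := y⁻¹) (β := 0) (γ := 0) (δ := y⁻¹) (by simp [hy])
    (by simp only [ncard_setOf_snd_eq, le_refl]) ?_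
  rintro ⟨x, z⟩ h
  have hy1 : s y ≠ 0 := by simpa
  have hy2 : s (s y) ≠ 0 := by simpa
  have hy3 : s (s (s y)) ≠ 0 := by simpa
  rw [← eq_div_iff hy] at ha hb hc
  simp only [Set.mem_ofPred_eq, qPoly, RingHom.id_apply, ha, hb, hc, zero_mul, zero_add, add_zero,
    map_mul, map_inv₀] at h ⊢
  rw [h]
  field_simp

theorem semilinearEquivalent_graph_adjoint (hK : Fintype.card F = q ^ 4) (hq : 2 ≤ q)
    (hs : ∀ x, s x = x ^ q) {a b c : F} (hac : ¬(a = 0 ∧ c = 0)) :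
    SemilinearEquivalent {w : F × F | w.2 = qPoly s a b c w.1}
      {w : F × F | w.2 = qPoly s (s c) (s (s b)) (s (s (s a))) w.1} := by
  obtain ⟨u, t, ht, hu, hne⟩ := exists_adjoint_coeffs hK hq hs b hac
  refine .of_matrix (s.comp s) (α := s (s u)) (β := -t)
    (γ := b * s (s b) * t + s (a * s (s a) - c * s (s c)) * s t) (δ := u)
    (fun h => hne (by linear_combination h)) (by simp only [ncard_setOf_snd_eq, le_refl]) ?_
  rintro ⟨x, z⟩ h
  obtain rfl : z = qPoly s a b c x := h
  have := qPoly_adjoint_apply (map_four_eq_self hK hs) ht hu x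
  simp only [Set.mem_ofPred_eq, RingHom.comp_apply, neg_mul, ← sub_eq_add_neg, this]

variable {Fq : Subfield F}

theorem map_eq_self_of_mem (hFq : Nat.card Fq = q) (hs : ∀ x, s x = x ^ q) (k : Fq) :
    s k = k := by
  have := Fintype.ofFinite Fq
  have h := FiniteField.pow_card k
  rw [← Nat.card_eq_fintype_card, hFq] at h
  rw [hs]
  exact_mod_cast congrArg Subtype.val h

/-- Every `F_q`-linear endomorphism of `F_{q^4}` is given by a `q`-polynomial. -/
theorem exists_eq_qPoly (hK : Fintype.card F = q ^ 4) (hq : 2 ≤ q) (hFq : Nat.card Fq = q)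
    (hs : ∀ x, s x = x ^ q) (f : F →ₗ[Fq] F) :
    ∃ d a b c, ∀ x, f x = d * x + qPoly s a b c x := by
  classical
  have := Fintype.ofFinite Fq
  have hfix := map_eq_self_of_mem hFq hs
  let Φ : F × F × F × F →+ (F →ₗ[Fq] F) := AddMonoidHom.mk'
    (fun v =>
      { toFun := fun x => v.1 * x + qPoly s v.2.1 v.2.2.1 v.2.2.2 x
        map_add' := fun x y => by simp only [qPoly, map_add]; ring
        map_smul' := fun k x => by
          simp only [qPoly, Subfield.smul_def, smul_eq_mul, map_mul, hfix, RingHom.id_apply]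
          ring })
    (fun v w => by
      ext x
      simp only [qPoly, LinearMap.coe_mk, AddHom.coe_mk, LinearMap.add_apply, Prod.fst_add,
        Prod.snd_add]
      ring)
  have hinj : Function.Injective Φ := by
    rw [injective_iff_map_eq_zero]
    rintro ⟨d, a, b, c⟩ h
    have h' : ∀ x, (0 : F →+ F) x = d * x + qPoly s a b c x := fun x =>
      (LinearMap.congr_fun h x).symm
    obtain ⟨rfl, h2⟩ := qPoly_invariants hK hq hs h'
      (g := 0) (d' := 0) (a' := 0) (b' := 0) (c' := 0) (by simp [qPoly]) (fun m => Iff.rfl)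
    obtain ⟨e1, e2, -, e4⟩ := h2 rfl
    have hb : b = 0 := by simpa using e2
    have e5 := e4 hb rfl
    rw [e1] at e5
    rcases mul_eq_zero.1 (show a * s c = 0 by simpa using e1) with rfl | hc
    · have hc : c = 0 := by simpa using e5
      simp [hb, hc]
    · have hc : c = 0 := by simpa using hc
      subst hc
      have ha : a = 0 := by simpa using e5
      simp [hb, ha]
  have := Module.finite_of_finite Fq (M := F)
  have hcF : Fintype.card F = q ^ Module.finrank Fq F := by
    rw [Module.card_eq_pow_finrank (K := Fq) (V := F), ← Nat.card_eq_fintype_card, hFq]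
  have hfr : Module.finrank Fq F = 4 :=
    Nat.pow_right_injective hq (hcF.symm.trans hK)
  have hcard : Nat.card (F × F × F × F) = Nat.card (F →ₗ[Fq] F) := by
    rw [Module.natCard_eq_pow_finrank (K := Fq) (V := F →ₗ[Fq] F), Module.finrank_linearMap, hfr,
      hFq]
    simp only [Nat.card_prod]
    simp only [Nat.card_eq_fintype_card, hK]
    ring
  have : Finite (F →ₗ[Fq] F) := Module.finite_of_finite Fq
  obtain ⟨⟨d, a, b, c⟩, rfl⟩ := ((Nat.bijective_iff_injective_and_card Φ).2 ⟨hinj, hcard⟩).2 f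
  exact ⟨d, a, b, c, fun x => rfl⟩

theorem exists_mem_iff_qPoly (hK : Fintype.card F = q ^ 4) (hq : 2 ≤ q) (hFq : Nat.card Fq = q)
    (hs : ∀ x, s x = x ^ q) {U : Submodule Fq (F × F)} (hU : Module.finrank Fq U = 4) {m : F}
    (hm : ∀ u ∈ U, u.2 = m * u.1 → u = 0) :
    ∃ d a b c, ∀ u : F × F, u ∈ U ↔
      u.1 = d * (u.2 - m * u.1) + qPoly s a b c (u.2 - m * u.1) := by
  have := Fintype.ofFinite Fq
  have := Module.finite_of_finite Fq (M := F)
  have hfr : Module.finrank Fq F = 4 := by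
    have hcF : Fintype.card F = q ^ Module.finrank Fq F := by
      rw [Module.card_eq_pow_finrank (K := Fq) (V := F), ← Nat.card_eq_fintype_card, hFq]
    exact Nat.pow_right_injective hq (hcF.symm.trans hK)
  let P : U →ₗ[Fq] F :=
    { toFun := fun u => u.1.2 - m * u.1.1
      map_add' := fun u v => by simp; ring
      map_smul' := fun k u => by simp [Subfield.smul_def]; ring }
  have hP : Function.Injective P := by
    rw [injective_iff_map_eq_zero]
    rintro ⟨u, hu⟩ h
    exact Subtype.ext (hm u hu (sub_eq_zero.1 h))
  let e : U ≃ₗ[Fq] F := LinearEquiv.ofInjectiveOfFinrankEq P hP (by rw [hU, hfr])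
  have he : ∀ u, e u = u.1.2 - m * u.1.1 := fun u => rfl
  obtain ⟨d, a, b, c, h⟩ := exists_eq_qPoly hK hq hFq hs
    ((LinearMap.fst Fq F F ∘ₗ U.subtype) ∘ₗ e.symm.toLinearMap)
  refine ⟨d, a, b, c, fun u => ?_⟩
  rw [← h]
  simp only [LinearMap.comp_apply, LinearEquiv.coe_coe, Submodule.subtype_apply,
    LinearMap.fst_apply]
  constructor
  · intro hu
    rw [← he ⟨u, hu⟩, LinearEquiv.symm_apply_apply]
  · intro hu
    have h2 := he (e.symm (u.2 - m * u.1))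
    rw [LinearEquiv.apply_symm_apply, ← hu] at h2
    convert (e.symm (u.2 - m * u.1)).2 using 1
    ext
    · exact hu
    · linear_combination h2

theorem exists_forall_snd_eq_mul_fst (hK : Fintype.card F = q ^ 4) (hFq : Nat.card Fq = q)
    {U : Submodule Fq (F × F)} (hU : Module.finrank Fq U = 4) :
    ∃ m : F, ∀ u ∈ U, u.2 = m * u.1 → u = 0 := by
  classical
  have hcU : Nat.card U = q ^ 4 := by
    have := Fintype.ofFinite Fq
    rw [Module.natCard_eq_pow_finrank (K := Fq), hU, hFq]
  by_contra! h
  choose u hu hum hu0 using h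
  have hinj : Function.Injective (fun o : Option F => o.elim (0 : U) fun m => ⟨u m, hu m⟩) := by
    have hfst : ∀ m, (u m).1 ≠ 0 := fun m h0 =>
      hu0 m (Prod.ext h0 (by rw [hum, h0]; simp))
    rintro (_ | m) (_ | n) h
    · rfl
    · exact absurd (congrArg Subtype.val h).symm (hu0 n)
    · exact absurd (congrArg Subtype.val h) (hu0 m)
    · have e : u m = u n := congrArg Subtype.val h
      have := hum m
      rw [e, hum n] at this
      rw [mul_right_cancel₀ (hfst n) this]
  have := Nat.card_le_card_of_injective _ hinj
  rw [Finite.card_option, hcU, Nat.card_eq_fintype_card, hK] at this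
  omega

theorem exists_subfield_card_eq_sq {p e : ℕ} (hp : p.Prime) (he : 0 < e)
    (hK : Fintype.card F = (p ^ e) ^ 4) : ∃ E : Subfield F, Nat.card E = (p ^ e) ^ 2 := by
  have := Fact.mk hp
  have : CharP F p := charP_of_card_eq_prime_pow (f := e * 4) (by rw [hK, pow_mul])
  let _ := ZMod.algebra F p
  have hfr : Module.finrank (ZMod p) F = e * 4 := by
    apply Nat.pow_right_injective hp.two_le
    simp only [FiniteField.pow_finrank_eq_card, hK, pow_mul]
  obtain ⟨f⟩ := FiniteField.nonempty_algHom_of_finrank_dvd (F := ZMod p)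
    (K := GaloisField p (e * 2)) (L := F)
    (by rw [hfr, GaloisField.finrank p (by omega)]; exact ⟨2, by ring⟩)
  refine ⟨(f : GaloisField p (e * 2) →+* F).fieldRange, ?_⟩
  rw [← pow_mul, ← GaloisField.card p (e * 2) (by omega)]
  exact (Nat.card_congr (Equiv.ofInjective _ f.injective)).symm

end Graph

section LinSet

variable {F : Type} [Field F]

theorem exists_eq_smul_of_linSet_subset {S T : Set (F × F)} (h : linSet F S ⊆ linSet F T)
    {u : F × F} (hu : u ∈ S) (hu0 : u ≠ 0) :
    ∃ v ∈ T, v ≠ 0 ∧ ∃ k : F, k ≠ 0 ∧ u = k • v := by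
  obtain ⟨v, hv, hv0, hs⟩ := h ⟨u, hu, hu0, rfl⟩
  obtain ⟨k, rfl⟩ := Submodule.mem_span_singleton.1
    (hs ▸ Submodule.mem_span_singleton_self u)
  exact ⟨v, hv, hv0, k, fun hk => hu0 (by simp [hk]), rfl⟩

variable {Fq : Subfield F}

theorem exists_mul_eq_iff_of_mem_iff {U : Submodule Fq (F × F)} {m : F} {f : F → F}
    (hf : f 0 = 0) (h : ∀ u : F × F, u ∈ U ↔ u.1 = f (u.2 - m * u.1)) (n : F) :
    (∃ x, x ≠ 0 ∧ f x = n * x) ↔ ∃ u ∈ U, u ≠ 0 ∧ u.1 = n * (u.2 - m * u.1) := by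
  constructor
  · rintro ⟨x, hx, hfx⟩
    refine ⟨(f x, x + m * f x), by simp [h], fun h0 => hx ?_, by simp [hfx]⟩
    obtain ⟨h1, h2⟩ := Prod.mk_eq_zero.1 h0
    simpa [h1] using h2
  · rintro ⟨u, hu, hu0, hn⟩
    have hu' := (h u).1 hu
    refine ⟨u.2 - m * u.1, fun h0 => hu0 ?_, by rw [← hu', ← hn]⟩
    have h1 : u.1 = 0 := by rw [hu', h0, hf]
    exact Prod.ext h1 (by simpa [h1] using h0)

variable [Fintype F] {q : ℕ} {s : F →+* F}

theorem semilinearEquivalent_graph_of_mem_iff (hK : Fintype.card F = q ^ 4)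
    (hFq : Nat.card Fq = q) {U : Submodule Fq (F × F)} (hU : Module.finrank Fq U = 4)
    {m d a b c : F}
    (h : ∀ u : F × F, u ∈ U ↔ u.1 = d * (u.2 - m * u.1) + qPoly s a b c (u.2 - m * u.1)) :
    SemilinearEquivalent (U : Set (F × F)) {w : F × F | w.2 = qPoly s a b c w.1} := by
  refine .of_matrix (RingHom.id F) (α := -m) (β := 1) (γ := 1 + d * m) (δ := -d)
    (fun h => one_ne_zero (by linear_combination -h)) ?_ fun w hw => ?_
  · have := Fintype.ofFinite Fq
    rw [ncard_setOf_snd_eq, Nat.card_eq_fintype_card, hK, ← Nat.card_coe_set_eq]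
    exact ((Module.natCard_eq_pow_finrank (K := Fq) (V := U)).trans (by rw [hU, hFq])).ge
  · have hw := (h w).1 hw
    simp only [Set.mem_ofPred_eq, RingHom.id_apply]
    rw [show -m * w.1 + 1 * w.2 = w.2 - m * w.1 by ring]
    linear_combination hw

/-- If the map defining `U` only involves `x` and `x ^ q ^ 2`, then `U` is a subspace over
the subfield of order `q ^ 2`. -/
theorem exists_submodule_coe_eq {E : Subfield F} (hE : Nat.card E = q ^ 2)
    (hs : ∀ x, s x = x ^ q) {U : Submodule Fq (F × F)} {m d b : F}
    (h : ∀ u : F × F, u ∈ U ↔ u.1 = d * (u.2 - m * u.1) + qPoly s 0 b 0 (u.2 - m * u.1)) :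
    ∃ U' : Submodule E (F × F), (U' : Set (F × F)) = U := by
  have hfix : ∀ k : E, s (s k) = k := fun k => by
    have := Fintype.ofFinite E
    have h := FiniteField.pow_card k
    rw [← Nat.card_eq_fintype_card, hE] at h
    rw [hs, hs, ← pow_mul, ← sq]
    exact_mod_cast congrArg Subtype.val h
  refine ⟨{ U.toAddSubmonoid with smul_mem' := fun k u hu => ?_ }, rfl⟩
  have hu := (h u).1 hu
  refine (h _).2 ?_
  simp only [qPoly, Prod.smul_fst, Prod.smul_snd, Subfield.smul_def, smul_eq_mul, map_sub, map_mul,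
    hfix] at hu ⊢
  linear_combination (k : F) * hu

end LinSet

/-- every `F_q`-linear set of rank 4 of PG(1,q^4) with maximum field of
linearity `F_q` is simple: if `U, V` are rank-4 `F_q`-subspaces of `W = F_{q^4} × F_{q^4}`
with `L_U = L_V`, then some invertible semilinear map of `W` carries `U` to `V`. -/
theorem stmt_10 (p e q : ℕ) (hp : p.Prime) (he : 0 < e) (hq : q = p ^ e)
    (F : Type) [Field F] [Fintype F] (hF : Fintype.card F = q ^ 4)
    (Fq : Subfield F) (hFq : Nat.card Fq = q)
    (U V : Submodule Fq (F × F))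
    (hU : Module.finrank Fq U = 4) (hV : Module.finrank Fq V = 4)
    (hmax : ∀ m : ℕ, m ∣ 4 → 1 < m → ∀ E : Subfield F, Nat.card E = q ^ m →
      ∀ U' : Submodule E (F × F), linSet F (U' : Set (F × F)) ≠ linSet F (U : Set (F × F)))
    (hUV : linSet F (U : Set (F × F)) = linSet F (V : Set (F × F))) :
    ∃ (σ : F ≃+* F) (φ : (F × F) ≃+ (F × F)),
      (∀ (c : F) (w : F × F), φ (c • w) = σ c • φ w) ∧
      φ '' (U : Set (F × F)) = (V : Set (F × F)) := by
  classical
  have hq2 : 2 ≤ q := by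
    rw [hq]
    exact hp.two_le.trans (Nat.le_self_pow he.ne' p)
  have := Fact.mk hp
  have : CharP F p := charP_of_card_eq_prime_pow (f := e * 4) (by rw [hF, hq, pow_mul])
  obtain ⟨s, hs⟩ : ∃ s : F →+* F, ∀ x, s x = x ^ q :=
    ⟨iterateFrobenius F p e, fun x => by rw [iterateFrobenius_def, hq]⟩
  obtain ⟨m, hmU⟩ := exists_forall_snd_eq_mul_fst hF hFq hU
  have hmV : ∀ v ∈ V, v.2 = m * v.1 → v = 0 := by
    intro v hv hvm
    by_contra hv0
    obtain ⟨u, hu, hu0, k, hk, rfl⟩ := exists_eq_smul_of_linSet_subset hUV.ge hv hv0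
    refine hu0 (hmU u hu (mul_left_cancel₀ hk ?_))
    simp only [Prod.smul_fst, Prod.smul_snd, smul_eq_mul] at hvm
    linear_combination hvm
  obtain ⟨d, a, b, c, hUf⟩ := exists_mem_iff_qPoly hF hq2 hFq hs hU hmU
  obtain ⟨d', a', b', c', hVg⟩ := exists_mem_iff_qPoly hF hq2 hFq hs hV hmV
  have hslope : ∀ n : F, (∃ x, x ≠ 0 ∧ d * x + qPoly s a b c x = n * x) ↔
      ∃ x, x ≠ 0 ∧ d' * x + qPoly s a' b' c' x = n * x := by
    have key : ∀ {S T : Submodule Fq (F × F)},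
        linSet F (S : Set (F × F)) ⊆ linSet F (T : Set (F × F)) → ∀ n : F,
        (∃ u ∈ S, u ≠ 0 ∧ u.1 = n * (u.2 - m * u.1)) →
        ∃ u ∈ T, u ≠ 0 ∧ u.1 = n * (u.2 - m * u.1) := by
      rintro S T hST n ⟨u, hu, hu0, hun⟩
      obtain ⟨v, hv, hv0, k, hk, rfl⟩ := exists_eq_smul_of_linSet_subset hST hu hu0
      refine ⟨v, hv, hv0, mul_left_cancel₀ hk ?_⟩
      simp only [Prod.smul_fst, Prod.smul_snd, smul_eq_mul] at hun
      linear_combination hun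
    intro n
    rw [exists_mul_eq_iff_of_mem_iff (f := fun x => d * x + qPoly s a b c x) (by simp [qPoly]) hUf,
      exists_mul_eq_iff_of_mem_iff (f := fun x => d' * x + qPoly s a' b' c' x) (by simp [qPoly])
        hVg]
    exact ⟨key hUV.le n, key hUV.ge n⟩
  let Q (d a b c : F) : F →+ F := AddMonoidHom.mk' (fun x => d * x + qPoly s a b c x)
    fun x y => by simp only [qPoly, map_add]; ring
  obtain ⟨rfl, -⟩ := qPoly_invariants hF hq2 hs (f := Q d a b c) (g := Q d' a' b' c')
    (fun x => rfl) (fun x => rfl) hslope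
  obtain ⟨h1, h2, h3, hN⟩ := (qPoly_invariants hF hq2 hs (f := Q 0 a b c) (g := Q 0 a' b' c')
    (fun x => rfl) (fun x => rfl) fun n => by
      have hd : ∀ x y : F, 0 * x + y = n * x ↔ d * x + y = (n + d) * x := fun x y =>
        ⟨fun h => by linear_combination h, fun h => by linear_combination h⟩
      simpa only [Q, AddMonoidHom.mk'_apply, hd] using hslope (n + d)).2 rfl
  have hac : ¬(a = 0 ∧ c = 0) := by
    rintro ⟨rfl, rfl⟩
    obtain ⟨E, hE⟩ := exists_subfield_card_eq_sq hp he (by rw [hF, hq])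
    rw [← hq] at hE
    obtain ⟨U', hU'⟩ := exists_submodule_coe_eq hE hs hUf
    exact hmax 2 (by norm_num) one_lt_two E hE U' (by rw [hU'])
  have hfg : SemilinearEquivalent {w : F × F | w.2 = qPoly s a b c w.1}
      {w : F × F | w.2 = qPoly s a' b' c' w.1} := by
    rcases exists_conj_or_conj_adjoint hF hq2 hs hac h1 h2 h3
        (fun hb hb' => by
          have := hN hb hb'
          rw [h1] at this
          linear_combination this) with
      ⟨y, hy, ha, hb, hc⟩ | ⟨y, hy, ha, hb, hc⟩
    · exact semilinearEquivalent_graph_of_conj hy ha hb hc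
    · exact (semilinearEquivalent_graph_adjoint hF hq2 hs hac).trans
        (semilinearEquivalent_graph_of_conj hy ha hb hc)
  exact (semilinearEquivalent_graph_of_mem_iff hF hFq hU hUf).trans
    (hfg.trans (semilinearEquivalent_graph_of_mem_iff hF hFq hV hVg).symm)
end

section
/- Let W = F_{q^n} × F_{q^n} and let U be a nonzero F_q-subspace of W with dim_{F_q} U = n, and set d = min{ w_{L_U}(P) : P ∈ L_U }. Then d divides n, there exists an F_{q^d}-subspace U' of W with L_{U'} = L_U (so L_U is an F_{q^d}-linear set), and for every e > d there is no F_{q^e}-subspace U'' of W with L_{U''} = L_U; that is, the maximum field of linearity of L_U is F_{q^d}. -/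
open Polynomial in
theorem det_piecewise_eq_zero_of_det_add_diagonal_eq_zero {ι K : Type*} [Fintype ι] [DecidableEq ι]
    [CommRing K] {q : ℕ} (hq : 2 ≤ q) {σ : ι → ℕ} (hσ : Function.Injective σ)
    (N : Matrix ι ι K) (t : ι → K)
    (h : (Matrix.diagonal (fun i => C (t i) * X ^ q ^ σ i) + N.map C).det = 0) (s : Finset ι) :
    (Matrix.of fun i j => if i ∈ s then (if i = j then t i else 0) else N i j).det = 0 := by
  set δ : Finset ι → K := fun s =>
    (Matrix.of fun i j => if i ∈ s then (if i = j then t i else 0) else N i j).det with hδ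
  have key : (Matrix.diagonal (fun i => C (t i) * X ^ q ^ σ i) + N.map C).det
      = ∑ s : Finset ι, C (δ s) * X ^ (∑ i ∈ s, q ^ σ i) := by
    have h1 : (Matrix.diagonal (fun i => C (t i) * X ^ q ^ σ i) + N.map C).det =
        ∑ s : Finset ι, (Matrix.of (s.piecewise
          (Matrix.of.symm (Matrix.diagonal fun i => C (t i) * X ^ q ^ σ i))
          (Matrix.of.symm (N.map C)))).det :=
      (Matrix.detRowAlternating (n := ι) (R := K[X])).toMultilinearMap.map_add_univ
        (Matrix.of.symm (Matrix.diagonal (fun i => C (t i) * X ^ q ^ σ i))) (Matrix.of.symm (N.map C))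
    refine h1.trans (Finset.sum_congr rfl fun s _ => ?_)
    have h2 : Matrix.of (s.piecewise (Matrix.of.symm (Matrix.diagonal fun i => C (t i) * X ^ q ^ σ i))
        (Matrix.of.symm (N.map C))) = Matrix.of fun i j => (if i ∈ s then X ^ q ^ σ i else 1) *
          ((Matrix.of fun i j => if i ∈ s then (if i = j then t i else 0) else N i j).map C) i j := by
      ext1 i j
      simp only [Matrix.of_apply, Finset.piecewise, Matrix.map_apply]
      by_cases hi : i ∈ s
      · by_cases hij : i = j
        · subst hij; simp only [hi, if_true, Matrix.of_symm_apply, Matrix.diagonal_apply_eq]; ring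
        · simp [hi, hij]
      · simp [hi]
    rw [h2, Matrix.det_mul_column, Finset.prod_ite_mem, Finset.univ_inter, Finset.prod_pow_eq_pow_sum,
      mul_comm, hδ, RingHom.map_det]
    rfl
  rw [key] at h
  have h3 := congrArg (fun P : K[X] => P.coeff (∑ i ∈ s, q ^ σ i)) h
  simp only [finsetSum_coeff, coeff_C_mul, coeff_X_pow, coeff_zero] at h3
  rw [Finset.sum_eq_single s] at h3
  · simpa using h3
  · intro s' _ hne
    rw [if_neg, mul_zero]
    intro heq
    apply hne
    have := @Finset.geomSum_injective q hq (s.map ⟨σ, hσ⟩) (s'.map ⟨σ, hσ⟩) (by simpa using heq)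
    exact (Finset.map_injective _ this).symm
  · simp

theorem exists_shortest_path {ι : Type*} {r : ι → ι → Prop} {o k : ι}
    (h : Relation.ReflTransGen r o k) :
    ∃ (l : ℕ) (p : ℕ → ι), p 0 = o ∧ p l = k ∧ (∀ j < l, r (p j) (p (j + 1))) ∧
      (∀ j < l, p j ≠ k) ∧ ∀ i j, i + 1 < j → j ≤ l → ¬ r (p i) (p j) := by
  classical
  have hex : ∃ (l : ℕ) (p : ℕ → ι), p 0 = o ∧ p l = k ∧ ∀ j < l, r (p j) (p (j + 1)) := by
    induction h with
    | refl => exact ⟨0, fun _ => o, rfl, rfl, by simp⟩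
    | @tail b c _ hbc ih =>
      obtain ⟨l, p, h0, hl, hp⟩ := ih
      refine ⟨l + 1, fun j => if j ≤ l then p j else c, by simpa using h0, by simp, fun j hj => ?_⟩
      rcases Nat.lt_succ_iff_lt_or_eq.mp hj with hj | rfl
      · simpa [hj.le, Nat.succ_le_of_lt hj] using hp j hj
      · simpa [hl] using hbc
  obtain ⟨p, h0, hl, hp⟩ := Nat.find_spec hex
  refine ⟨Nat.find hex, p, h0, hl, hp, fun j hj hjk => ?_, fun i j hij hj hr => ?_⟩
  · exact Nat.find_min hex hj ⟨p, h0, hjk, fun i hi => hp i (hi.trans hj)⟩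
  · refine Nat.find_min hex (m := Nat.find hex - (j - i - 1)) (by omega)
      ⟨fun a => if a ≤ i then p a else p (a + (j - i - 1)), by simpa using h0, ?_, fun a ha => ?_⟩
    · have : ¬ Nat.find hex - (j - i - 1) ≤ i := fun h => by omega
      simp only [this, if_false]
      rwa [show Nat.find hex - (j - i - 1) + (j - i - 1) = Nat.find hex by omega]
    · rcases lt_trichotomy a i with hai | rfl | hai
      · simp only [hai.le, Nat.succ_le_of_lt hai, if_true]
        exact hp a (by omega)
      · simp only [le_refl, if_true, show ¬ a + 1 ≤ a by omega, if_false]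
        rwa [show a + 1 + (j - a - 1) = j by omega]
      · simp only [show ¬ a ≤ i by omega, show ¬ a + 1 ≤ i by omega, if_false]
        rw [show a + 1 + (j - i - 1) = a + (j - i - 1) + 1 by omega]
        exact hp _ (by omega)

open Polynomial Matrix in
theorem not_reflTransGen_of_vecMul_eq_single {ι K : Type*} [Fintype ι] [DecidableEq ι]
    [Field K] {q : ℕ} (hq : 2 ≤ q) {σ : ι → ℕ} (hσ : Function.Injective σ)
    (N : Matrix ι ι K) (B : ι → K[X]) {g : K[X]} (hg : g ≠ 0) {o k : ι}
    (hB : B ᵥ* (N.map C - diagonal fun i => X ^ q ^ σ i) = Pi.single o g) (hk : B k = 0) :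
    ¬ Relation.ReflTransGen (fun i j => N i j ≠ 0) o k := by
  intro hr
  obtain ⟨l, p, h0, hl, hp, hpk, hmin⟩ := exists_shortest_path hr
  -- replacing row `k` by a unit vector keeps the matrix singular
  set N' : Matrix ι ι K := N.updateRow k (Pi.single o 1) with hN'
  set t : ι → K := fun i => if i = k then 0 else -1 with ht
  have hdet : (Matrix.diagonal (fun i => C (t i) * X ^ q ^ σ i) + N'.map C).det = 0 := by
    rw [← exists_vecMul_eq_zero_iff]
    refine ⟨Function.update B k (-g), fun h => hg ?_, ?_⟩
    · simpa using congrFun h k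
    · ext1 j
      have hj := congrFun hB j
      simp only [vecMul, dotProduct] at hj ⊢
      rw [← Finset.add_sum_erase _ _ (Finset.mem_univ k)] at hj ⊢
      rw [hk, zero_mul, zero_add] at hj
      have : ∑ x ∈ Finset.univ.erase k, Function.update B k (-g) x *
          (Matrix.diagonal (fun i => C (t i) * X ^ q ^ σ i) + N'.map C : Matrix ι ι K[X]) x j
          = ∑ x ∈ Finset.univ.erase k, B x * (N.map C - diagonal fun i => X ^ q ^ σ i : Matrix ι ι K[X]) x j := by
        refine Finset.sum_congr rfl fun x hx => ?_
        have hxk := Finset.ne_of_mem_erase hx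
        by_cases hxj : x = j
        · subst hxj
          simp [hxk, hN', ht, neg_add_eq_sub]
        · simp [hxk, hN', ht, hxj]
      rw [this, hj]
      by_cases hjo : j = o
      · subst hjo
        by_cases hjk : j = k
        · subst hjk; simp [hN', ht]
        · simp [hN', ht, diagonal_apply_ne' _ hjk]
      · by_cases hjk : j = k
        · subst hjk; simp [hN', ht, hjo]
        · simp [hN', ht, diagonal_apply_ne' _ hjk, hjo]
  classical
  set P : Finset ι := (Finset.range (l + 1)).image p with hP
  have hA := det_piecewise_eq_zero_of_det_add_diagonal_eq_zero hq hσ N' t hdet Pᶜ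
  rw [← exists_mulVec_eq_zero_iff] at hA
  obtain ⟨v, hv0, hv⟩ := hA
  apply hv0
  have hpP : ∀ j ≤ l, p j ∈ P := fun j hj =>
    Finset.mem_image_of_mem _ (Finset.mem_range.mpr (by omega))
  have hout : ∀ i, i ∉ P → v i = 0 := by
    intro i hi
    have h1 := congrFun hv i
    have hik : i ≠ k := by rintro rfl; exact hi (hl ▸ hpP l le_rfl)
    simpa [mulVec, dotProduct, hi, ht, hik] using h1
  have hin : ∀ j ≤ l, v (p j) = 0 := by
    intro j
    induction j using Nat.strong_induction_on with
    | _ j ih =>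
      intro hj
      rcases Nat.eq_zero_or_pos j with rfl | hjpos
      · have h1 := congrFun hv k
        have hkP : k ∈ P := hl ▸ hpP l le_rfl
        simpa [mulVec, dotProduct, hkP, hN', Pi.single_apply, h0] using h1
      · obtain ⟨i, rfl⟩ : ∃ i, j = i + 1 := ⟨j - 1, by omega⟩
        have h1 := congrFun hv (p i)
        have hiP := hpP i (by omega)
        simp only [mulVec, dotProduct, of_apply, Pi.zero_apply] at h1
        simp only [Finset.mem_compl, hiP, not_true, if_false, hN'] at h1
        rw [Finset.sum_eq_single (p (i + 1))] at h1
        · rw [updateRow_ne (hpk i (by omega))] at h1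
          exact (mul_eq_zero.mp h1).resolve_left (hp i (by omega))
        · intro x _ hx
          rw [updateRow_ne (hpk i (by omega))]
          by_cases hxP : x ∈ P
          · obtain ⟨m, hm, rfl⟩ := Finset.mem_image.mp hxP
            rw [Finset.mem_range] at hm
            rcases lt_trichotomy m (i + 1) with hmi | rfl | hmi
            · rw [ih m hmi (by omega), mul_zero]
            · exact absurd rfl hx
            · rw [not_not.mp (hmin i m hmi (by omega)), zero_mul]
          · rw [hout x hxP, mul_zero]
        · simp
  ext1 i
  by_cases hi : i ∈ P
  · obtain ⟨m, hm, rfl⟩ := Finset.mem_image.mp hi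
    exact hin m (by rw [Finset.mem_range] at hm; omega)
  · exact hout i hi

section
open Polynomial

theorem frobeniusAlgHom_pow_apply (k R : Type*) [Field k] [Fintype k] [CommRing R] [Algebra k R]
    (i : ℕ) (z : R) : (FiniteField.frobeniusAlgHom k R ^ i) z = z ^ Fintype.card k ^ i := by
  simp [FiniteField.coe_frobeniusAlgHom, AlgHom.coe_pow, pow_iterate]

/-- The coefficients of a subspace polynomial are concentrated in degrees `q ^ i`. -/
theorem exists_eq_pow_of_coeff_prod_X_sub_C_ne_zero {k V L : Type*} [Field k] [Fintype k]
    [AddCommGroup V] [Module k V] [Fintype V] [Field L] [Algebra k L] (h : V →ₗ[k] L)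
    (hh : Function.Injective h) {j : ℕ} (hj : (∏ x, (X - C (h x))).coeff j ≠ 0) :
    ∃ i ≤ Module.finrank k V, j = Fintype.card k ^ i := by
  classical
  set n := Module.finrank k V with hn
  set q := Fintype.card k with hq
  let T : (Fin (n + 1) → L) →ₗ[L] (V →ₗ[k] L) := Fintype.linearCombination L
    fun i : Fin (n + 1) => (FiniteField.frobeniusAlgHom k L ^ (i : ℕ)).toLinearMap ∘ₗ h
  have hT : T.ker ≠ ⊥ := by
    apply LinearMap.ker_ne_bot_of_finrank_lt
    rw [Module.finrank_linearMap_self, Module.finrank_fin_fun]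
    omega
  obtain ⟨α, hα, hα0⟩ := Submodule.exists_mem_ne_zero_of_ne_bot hT
  set Q : L[X] := ∑ i : Fin (n + 1), C (α i) * X ^ q ^ (i : ℕ) with hQ
  have hq1 : 1 < q := Fintype.one_lt_card
  have hcoeff : ∀ i : Fin (n + 1), Q.coeff (q ^ (i : ℕ)) = α i := by
    intro i
    simp only [hQ, finsetSum_coeff, coeff_C_mul, coeff_X_pow]
    rw [Finset.sum_eq_single i]
    · simp
    · intro b _ hb
      rw [if_neg, mul_zero]
      intro h
      exact hb (Fin.ext (Nat.pow_right_injective hq1 h).symm)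
    · simp
  have hdeg : Q.natDegree ≤ q ^ n := by
    refine natDegree_sum_le_of_forall_le _ _ fun i _ => (natDegree_C_mul_X_pow_le _ _).trans ?_
    exact Nat.pow_le_pow_right (by omega) (by omega)
  have hmonic : (∏ x, (X - C (h x))).Monic := monic_prod_of_monic _ _ fun x _ => monic_X_sub_C _
  have hroots : ∀ x, Q.eval (h x) = 0 := by
    intro x
    have := LinearMap.congr_fun (LinearMap.mem_ker.mp hα) x
    simp only [T, Fintype.linearCombination_apply, LinearMap.sum_apply, LinearMap.smul_apply,
      LinearMap.comp_apply, AlgHom.toLinearMap_apply, frobeniusAlgHom_pow_apply, smul_eq_mul,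
      LinearMap.zero_apply] at this
    simpa [hQ, eval_finsetSum] using this
  have hdvd : (∏ x, (X - C (h x))) ∣ Q := by
    refine Finset.prod_dvd_of_coprime ?_ fun x _ => dvd_iff_isRoot.mpr (hroots x)
    intro x _ y _ hxy
    exact pairwise_coprime_X_sub_C hh hxy
  have hcard : (∏ x, (X - C (h x))).natDegree = q ^ n := by
    rw [natDegree_prod_of_monic _ _ fun x _ => monic_X_sub_C _]
    simp [hn, hq, ← Module.card_eq_pow_finrank]
  have hQe := eq_leadingCoeff_mul_of_monic_of_dvd_of_natDegree_le hmonic hdvd (hcard ▸ hdeg)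
  have hQ0 : Q.leadingCoeff ≠ 0 := by
    rw [Ne, leadingCoeff_eq_zero]
    intro h0
    apply hα0
    ext i
    rw [← hcoeff i, h0]
    simp
  by_contra! hne
  have h1 : Q.coeff j = 0 := by
    simp only [hQ, finsetSum_coeff, coeff_C_mul, coeff_X_pow]
    refine Finset.sum_eq_zero fun i _ => ?_
    rw [if_neg (hne i (by omega)), mul_zero]
  rw [hQe, coeff_C_mul] at h1
  exact (mul_ne_zero hQ0 hj) h1

theorem coeff_prod_X_sub_C_natDegree_le {R ι : Type*} [CommRing R] (s : Finset ι)
    (l : ι → R[X]) (hl : ∀ i, (l i).natDegree ≤ 1) (j : ℕ) :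
    ((∏ i ∈ s, (X - C (l i))).coeff j).natDegree ≤ s.card - j := by
  classical
  induction s using Finset.induction_on generalizing j with
  | empty => 
    simp only [Finset.prod_empty, coeff_one]
    split_ifs <;> simp
  | insert a s ha ih =>
    rw [Finset.prod_insert ha, Finset.card_insert_of_notMem ha, sub_mul, coeff_sub, coeff_C_mul]
    refine (natDegree_sub_le _ _).trans (max_le ?_ ?_)
    · cases j with
      | zero => simp
      | succ j => rw [coeff_X_mul]; exact (ih j).trans (by omega)
    · rcases le_or_gt j s.card with hj | hj
      · exact natDegree_mul_le.trans ((add_le_add (hl a) (ih j)).trans (by omega))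
      · rw [coeff_eq_zero_of_natDegree_lt (p := ∏ i ∈ s, (X - C (l i)))]
        · simp
        · refine lt_of_le_of_lt (natDegree_prod_le _ _) (lt_of_le_of_lt ?_ hj)
          calc _ ≤ ∑ i ∈ s, 1 := Finset.sum_le_sum fun i _ => natDegree_X_sub_C_le _
            _ = _ := by simp

variable {k K : Type*} [Field k] [Field K] [Algebra k K] [Fintype K]

/-- The Rédei polynomial of the graph of `f`. -/
noncomputable def redei (f : K →ₗ[k] K) : K[X][X] := ∏ x, (X - C (C (f x) - C x * X))

theorem redei_monic (f : K →ₗ[k] K) : (redei f).Monic :=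
  monic_prod_of_monic _ _ fun _ _ => monic_X_sub_C _

theorem redei_natDegree (f : K →ₗ[k] K) : (redei f).natDegree = Fintype.card K := by
  rw [redei, natDegree_prod_of_monic _ _ fun x _ => monic_X_sub_C _]
  simp only [natDegree_X_sub_C, Finset.sum_const, Finset.card_univ, smul_eq_mul, mul_one]

theorem natDegree_coeff_redei_le (f : K →ₗ[k] K) (j : ℕ) :
    ((redei f).coeff j).natDegree ≤ Fintype.card K - j :=
  coeff_prod_X_sub_C_natDegree_le _ _ (fun x => by compute_degree) j

theorem eval_redei (f : K →ₗ[k] K) (x : K) : (redei f).eval (C (f x) - C x * X) = 0 := by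
  rw [redei, eval_prod]
  exact Finset.prod_eq_zero (Finset.mem_univ x) (by simp)

theorem exists_eq_pow_of_coeff_redei_ne_zero [Fintype k] (f : K →ₗ[k] K) {j : ℕ}
    (hj : (redei f).coeff j ≠ 0) : ∃ i ≤ Module.finrank k K, j = Fintype.card k ^ i := by
  let L := FractionRing K[X]
  let ℓ : K →ₗ[k] K[X] := (CAlgHom (R := K) (A := K)).toLinearMap.restrictScalars k ∘ₗ f -
    (LinearMap.mulRight k (X : K[X])) ∘ₗ ((CAlgHom (R := K) (A := K)).toLinearMap.restrictScalars k)
  have hℓ : ∀ x, ℓ x = C (f x) - C x * X := fun x => by simp [ℓ]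
  let h : K →ₗ[k] L := (IsScalarTower.toAlgHom k K[X] L).toLinearMap ∘ₗ ℓ
  have hinj : Function.Injective h := by
    refine (IsFractionRing.injective K[X] L).comp fun x y hxy => ?_
    have := congrArg (fun P : K[X] => P.coeff 1) (show ℓ x = ℓ y from hxy)
    simpa [hℓ, coeff_C] using this
  refine exists_eq_pow_of_coeff_prod_X_sub_C_ne_zero h hinj ?_
  have hmap : (∏ x, (X - C (h x))) = (redei f).map (algebraMap K[X] L) := by
    simp [redei, Polynomial.map_prod, h, hℓ]
  rw [hmap, coeff_map]
  exact fun h0 => hj ((map_eq_zero_iff _ (IsFractionRing.injective K[X] L)).mp h0)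

theorem map_evalRingHom_redei (f : K →ₗ[k] K) (y : K) :
    (redei f).map (evalRingHom y) = ∏ x, (X - C ((f - LinearMap.mulRight k y) x)) := by
  simp [redei, Polynomial.map_prod]

theorem eval_coeff_redei_of_ker_eq_bot (f : K →ₗ[k] K) {y : K}
    (hy : (f - LinearMap.mulRight k y).ker = ⊥) (j : ℕ) :
    ((redei f).coeff j).eval y = (X ^ Fintype.card K - X : K[X]).coeff j := by
  have hbij : Function.Bijective (f - LinearMap.mulRight k y) :=
    Finite.injective_iff_bijective.mp (LinearMap.ker_eq_bot.mp hy)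
  have h1 : (redei f).map (evalRingHom y) = X ^ Fintype.card K - X := by
    rw [map_evalRingHom_redei,
      Fintype.prod_bijective _ hbij _ (fun x => X - C x) (fun _ => rfl)]
    have hmon : (X ^ Fintype.card K - X : K[X]).Monic :=
      monic_X_pow_sub (by simpa using Fintype.one_lt_card)
    have h := prod_multiset_X_sub_C_of_monic_of_roots_card_eq hmon (by
      rw [FiniteField.roots_X_pow_card_sub_X,
        FiniteField.X_pow_card_sub_X_natDegree_eq K Fintype.one_lt_card]
      rfl)
    rwa [FiniteField.roots_X_pow_card_sub_X] at h
  rw [← h1, coeff_map, coe_evalRingHom]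

theorem eval_coeff_redei_of_lt [Fintype k] (f : K →ₗ[k] K) {y : K} {j : ℕ}
    (hj : j < Fintype.card k ^ Module.finrank k (f - LinearMap.mulRight k y).ker) :
    ((redei f).coeff j).eval y = 0 := by
  classical
  rw [← coe_evalRingHom, ← coeff_map, map_evalRingHom_redei]
  rw [← Module.card_eq_pow_finrank] at hj
  have hdvd : (X : K[X]) ^ Fintype.card (f - LinearMap.mulRight k y).ker ∣
      ∏ x, (X - C ((f - LinearMap.mulRight k y) x)) := by
    rw [← Finset.prod_mul_prod_compl (Finset.univ.filter fun x => x ∈ (f - LinearMap.mulRight k y).ker),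
      Finset.prod_congr rfl (g := fun _ => X), Finset.prod_const, Fintype.card_subtype]
    · exact dvd_mul_right _ _
    · intro x hx
      rw [LinearMap.mem_ker.mp (Finset.mem_filter.mp hx).2, C_0, sub_zero]
  exact X_pow_dvd_iff.mp hdvd j hj

theorem sum_coeff_redei_mul [Fintype k] (f : K →ₗ[k] K) (x : K) :
    ∑ i ∈ Finset.range (Module.finrank k K + 1),
      (redei f).coeff (Fintype.card k ^ i) * (C (f x) - C x * X) ^ Fintype.card k ^ i = 0 := by
  classical
  have hq : 1 < Fintype.card k := Fintype.one_lt_card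
  have h := eval_redei f x
  rw [eval_eq_sum_range, redei_natDegree, Module.card_eq_pow_finrank (K := k)] at h
  rw [← h, ← Finset.sum_image (f := fun j => (redei f).coeff j * (C (f x) - C x * X) ^ j)
    (g := fun i => Fintype.card k ^ i) fun _ _ _ _ h => Nat.pow_right_injective hq h]
  refine Finset.sum_subset ?_ ?_
  · intro j hj
    obtain ⟨i, hi, rfl⟩ := Finset.mem_image.mp hj
    rw [Finset.mem_range] at hi ⊢
    exact Nat.lt_succ_of_le (Nat.pow_le_pow_right hq.le (by omega))
  · intro j _ hj
    by_contra hne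
    obtain ⟨i, hi, rfl⟩ := exists_eq_pow_of_coeff_redei_ne_zero f (left_ne_zero_of_mul hne)
    exact hj (Finset.mem_image_of_mem _ (Finset.mem_range.mpr (by omega)))

end

section
open Polynomial

theorem sum_range_eq_sum_zmod {M : Type*} [AddCommMonoid M] (n : ℕ) [NeZero n] (F : ℕ → M) :
    ∑ i ∈ Finset.range n, F i = ∑ i : ZMod n, F i.val := by
  symm
  refine Finset.sum_nbij ZMod.val (fun i _ => Finset.mem_range.mpr i.val_lt)
    (fun _ _ _ _ h => ZMod.val_injective n h) (fun i hi => ?_) fun _ _ => rfl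
  exact ⟨i, by simp, ZMod.val_cast_of_lt (by simpa using hi)⟩

variable {k K : Type*} [Field k] [Fintype k] [Field K] [Algebra k K] [Fintype K]
  {n : ℕ} [NeZero n]

theorem linearIndependent_frobenius_pow (hn : Module.finrank k K = n) :
    LinearIndependent K fun i : ZMod n => (FiniteField.frobeniusAlgHom k K ^ i.val).toLinearMap := by
  subst hn
  refine (linearIndependent_toLinearMap k K K).comp _ fun i j h => ?_
  have := (FiniteField.bijective_frobeniusAlgHom_pow k K).1 (a₁ := ⟨i.val, i.val_lt⟩)
    (a₂ := ⟨j.val, j.val_lt⟩) h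
  exact ZMod.val_injective _ (by simpa using this)

theorem exists_eq_sum_frobenius (hn : Module.finrank k K = n) (f : K →ₗ[k] K) :
    ∃ c : ZMod n → K, ∀ x, f x = ∑ i, c i * x ^ Fintype.card k ^ i.val := by
  let b := basisOfLinearIndependentOfCardEqFinrank (linearIndependent_frobenius_pow hn)
    (by rw [Module.finrank_linearMap_self, hn, ZMod.card])
  refine ⟨b.repr f, fun x => ?_⟩
  conv_lhs => rw [← b.sum_repr f]
  simp only [b, coe_basisOfLinearIndependentOfCardEqFinrank, LinearMap.sum_apply,
    LinearMap.smul_apply, AlgHom.toLinearMap_apply, frobeniusAlgHom_pow_apply, smul_eq_mul]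

theorem eq_zero_of_sum_mul_frobenius_eq_zero (hn : Module.finrank k K = n) {c : ZMod n → K[X]}
    (hc : ∀ x : K, ∑ i, c i * C (x ^ Fintype.card k ^ i.val) = 0) : c = 0 := by
  have hli := Fintype.linearIndependent_iff.mp (linearIndependent_frobenius_pow (K := K) hn)
  funext i
  rw [Pi.zero_apply]
  refine Polynomial.ext fun m => ?_
  rw [coeff_zero]
  refine hli (fun i => (c i).coeff m) ?_ i
  refine LinearMap.ext fun x => ?_
  have := congrArg (fun P : K[X] => P.coeff m) (hc x)
  simp only [finsetSum_coeff, coeff_mul_C, coeff_zero] at this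
  simp only [LinearMap.sum_apply, LinearMap.smul_apply, AlgHom.toLinearMap_apply,
    frobeniusAlgHom_pow_apply, smul_eq_mul, LinearMap.zero_apply]
  exact this

theorem pow_card_pow_val_add (hn : Module.finrank k K = n) (x : K) (i j : ZMod n) :
    x ^ Fintype.card k ^ (i + j).val = (x ^ Fintype.card k ^ i.val) ^ Fintype.card k ^ j.val := by
  have hcard : Fintype.card k ^ n = Fintype.card K := by rw [← hn, ← Module.card_eq_pow_finrank]
  rw [← pow_mul, ← pow_add, ZMod.val_add]
  conv_rhs => rw [← Nat.mod_add_div (i.val + j.val) n]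
  rw [pow_add, pow_mul x, pow_mul _ n, hcard]
  exact (FiniteField.pow_card_pow _ _).symm

/-- The coefficients of the Rédei polynomial of `f`, reduced modulo `X ^ q ^ n - X`. -/
noncomputable def redeiCoeff (n : ℕ) (f : K →ₗ[k] K) (i : ZMod n) : K[X] :=
  (redei f).coeff (Fintype.card k ^ i.val) + if i = 0 then 1 else 0

theorem sum_redeiCoeff_mul (hn : Module.finrank k K = n) (f : K →ₗ[k] K) (x : K) :
    ∑ i, redeiCoeff n f i * (C (f x) - C x * X) ^ Fintype.card k ^ i.val
      = C x * (X ^ Fintype.card K - X) := by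
  have hcard : Fintype.card k ^ n = Fintype.card K := by rw [← hn, ← Module.card_eq_pow_finrank]
  have h := sum_coeff_redei_mul f x
  have hlead : (redei f).coeff (Fintype.card K) = 1 := by
    rw [← redei_natDegree f, (redei_monic f).coeff_natDegree]
  have htop : (C (f x) - C x * X) ^ Fintype.card K = C (f x) - C x * X ^ Fintype.card K := by
    rw [← hcard, ← frobeniusAlgHom_pow_apply k, map_sub, map_mul]
    simp only [frobeniusAlgHom_pow_apply, ← C_pow]
    rw [hcard, FiniteField.pow_card, FiniteField.pow_card]
  rw [Finset.sum_range_succ, hn, sum_range_eq_sum_zmod, hcard, hlead, htop, one_mul] at h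
  simp only [redeiCoeff, add_mul, Finset.sum_add_distrib, ite_mul, zero_mul, one_mul,
    Finset.sum_ite_eq', Finset.mem_univ, if_true, ZMod.val_zero, pow_zero, pow_one]
  linear_combination h

open Matrix in
theorem redeiCoeff_vecMul (hn : Module.finrank k K = n) (f : K →ₗ[k] K) {c : ZMod n → K}
    (hc : ∀ x, f x = ∑ i, c i * x ^ Fintype.card k ^ i.val) :
    redeiCoeff n f ᵥ* ((Matrix.of fun i j => c (j - i) ^ Fintype.card k ^ i.val).map C -
      diagonal fun i => X ^ Fintype.card k ^ i.val) = Pi.single 0 (X ^ Fintype.card K - X) := by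
  rw [← sub_eq_zero]
  refine eq_zero_of_sum_mul_frobenius_eq_zero hn fun x => ?_
  have key : ∀ i : ZMod n, (C (f x) - C x * X) ^ Fintype.card k ^ i.val =
      ∑ j, ((Matrix.of fun i j => c (j - i) ^ Fintype.card k ^ i.val).map C -
        diagonal fun i => X ^ Fintype.card k ^ i.val : Matrix (ZMod n) (ZMod n) K[X]) i j
        * C (x ^ Fintype.card k ^ j.val) := by
    intro i
    rw [← frobeniusAlgHom_pow_apply k, map_sub, map_mul]
    simp only [frobeniusAlgHom_pow_apply, Matrix.sub_apply, sub_mul, Finset.sum_sub_distrib,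
      Matrix.map_apply, Matrix.of_apply]
    congr 1
    · rw [← C_pow, hc, ← frobeniusAlgHom_pow_apply k, map_sum, map_sum,
        ← Equiv.sum_comp (Equiv.addRight i)
          fun j => C (c (j - i) ^ Fintype.card k ^ i.val) * C (x ^ Fintype.card k ^ j.val)]
      refine Finset.sum_congr rfl fun j _ => ?_
      simp only [map_mul, frobeniusAlgHom_pow_apply, Equiv.coe_addRight, add_sub_cancel_right,
        pow_card_pow_val_add hn, C_pow]
    · rw [Finset.sum_eq_single i]
      · rw [diagonal_apply_eq, ← C_pow, mul_comm]
      · intro j _ hj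
        rw [diagonal_apply_ne' _ hj, zero_mul]
      · simp
  have h := sum_redeiCoeff_mul hn f x
  simp only [key, Finset.mul_sum] at h
  rw [Finset.sum_comm] at h
  simp only [Pi.sub_apply, sub_mul, Finset.sum_sub_distrib, vecMul, dotProduct, Finset.sum_mul]
  simp only [← mul_assoc] at h
  rw [h, Finset.sum_eq_single 0]
  · simp [mul_comm]
  · intro j _ hj
    simp [hj]
  · simp

end

section
open Polynomial

theorem exists_dvd_forall_dvd_val {n : ℕ} [NeZero n] {d : ℕ} (hd : d ≤ n) (S : Set (ZMod n))
    (hS : ∀ i : ZMod n, 0 < i.val → i.val < d → ¬ Relation.ReflTransGen (fun a b => b - a ∈ S) 0 i) :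
    ∃ g, g ∣ n ∧ d ≤ g ∧ ∀ i ∈ S, g ∣ i.val := by
  have hreach : ∀ i ∈ AddSubgroup.closure S, Relation.ReflTransGen (fun a b => b - a ∈ S) 0 i := by
    intro i hi
    rw [← AddSubgroup.mem_toAddSubmonoid, AddSubgroup.closure_toAddSubmonoid_of_finite] at hi
    induction hi using AddSubmonoid.closure_induction_right with
    | zero => exact .refl
    | add_right x _ y hy ih => exact ih.tail (by simpa using hy)
  set H : AddSubgroup ℤ := (AddSubgroup.closure S).comap (Int.castAddHom (ZMod n)) with hH
  obtain ⟨a, ha⟩ := Int.subgroup_cyclic H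
  have hmem : ∀ m : ℤ, (m : ZMod n) ∈ AddSubgroup.closure S ↔ a ∣ m := by
    intro m
    have : m ∈ H ↔ (m : ZMod n) ∈ AddSubgroup.closure S := Iff.rfl
    rw [← this, ha, ← AddSubgroup.zmultiples_eq_closure, Int.mem_zmultiples_iff]
  have hn : a.natAbs ∣ n := by
    have := (hmem n).mp (by simp)
    simpa [Int.natAbs_dvd_natAbs] using Int.natAbs_dvd_natAbs.mpr this
  refine ⟨a.natAbs, hn, ?_, fun i hi => ?_⟩
  · rcases (Nat.le_of_dvd (NeZero.pos n) hn).eq_or_lt with h | h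
    · omega
    · by_contra hlt
      have hpos : 0 < a.natAbs := Nat.pos_of_dvd_of_pos hn (NeZero.pos n)
      have hval : ((a.natAbs : ℕ) : ZMod n).val = a.natAbs := ZMod.val_cast_of_lt h
      refine hS (a.natAbs : ℕ) (by omega) (by omega) (hreach _ ?_)
      have := (hmem a.natAbs).mpr (Int.dvd_natAbs_self)
      simpa using this
  · have := (hmem i.val).mp (by simpa using AddSubgroup.subset_closure hi)
    exact Int.natCast_dvd_natCast.mp (Int.natAbs_dvd.mpr this)

theorem exists_subfield_natCard_eq (k K : Type*) [Field k] [Fintype k] [Field K] [Algebra k K]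
    [Fintype K] {g : ℕ} (hg : g ∣ Module.finrank k K) :
    ∃ E : Subfield K, Nat.card E = Fintype.card k ^ g := by
  obtain ⟨p, hp⟩ := CharP.exists k
  have : Fact p.Prime := ⟨CharP.char_is_prime k p⟩
  have : NeZero g := ⟨fun h => (Module.finrank_pos (R := k) (M := K)).ne' (by simpa [h] using hg)⟩
  obtain ⟨φ⟩ := FiniteField.nonempty_algHom_of_finrank_dvd (F := k)
    (K := FiniteField.Extension k p g) (L := K) (by rwa [FiniteField.finrank_extension])
  refine ⟨φ.toRingHom.fieldRange, ?_⟩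
  rw [← Nat.card_congr φ.toRingHom.rangeRestrictFieldEquiv.toEquiv, FiniteField.natCard_extension,
    Nat.card_eq_fintype_card]

variable {k K : Type*} [Field k] [Fintype k] [Field K] [Algebra k K] [Fintype K]

theorem redeiCoeff_eq_zero {n : ℕ} [NeZero n] (hn : Module.finrank k K = n) (f : K →ₗ[k] K) {d : ℕ}
    (hd : ∀ y : K, (f - LinearMap.mulRight k y).ker ≠ ⊥ →
      d ≤ Module.finrank k (f - LinearMap.mulRight k y).ker)
    {i : ZMod n} (hi0 : 0 < i.val) (hid : i.val < d) : redeiCoeff n f i = 0 := by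
  have hq : 1 < Fintype.card k := Fintype.one_lt_card
  have hcard : Fintype.card k ^ n = Fintype.card K := by rw [← hn, ← Module.card_eq_pow_finrank]
  have hi : i ≠ 0 := by rintro rfl; simp at hi0
  simp only [redeiCoeff, hi, if_false, add_zero]
  have hpow : 1 < Fintype.card k ^ i.val := Nat.one_lt_pow hi0.ne' hq
  have hpow' : Fintype.card k ^ i.val < Fintype.card K := by
    rw [← hcard]; exact Nat.pow_lt_pow_right hq i.val_lt
  refine eq_zero_of_natDegree_lt_card_of_eval_eq_zero' _ Finset.univ (fun y _ => ?_) ?_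
  · by_cases hy : (f - LinearMap.mulRight k y).ker = ⊥
    · rw [eval_coeff_redei_of_ker_eq_bot f hy, coeff_sub, coeff_X_pow, coeff_X,
        if_neg hpow'.ne, if_neg hpow.ne, sub_zero]
    · exact eval_coeff_redei_of_lt f (Nat.pow_lt_pow_right hq (hid.trans_le (hd y hy)))
  · rw [Finset.card_univ]
    exact (natDegree_coeff_redei_le f _).trans_lt (by omega)

theorem pow_val_le_card_directions {n : ℕ} [NeZero n] (hn : Module.finrank k K = n)
    (f : K →ₗ[k] K) {i : ZMod n} (hi : redeiCoeff n f i ≠ 0) (hi0 : i ≠ 0) :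
    Fintype.card k ^ i.val ≤ Nat.card {y : K // (f - LinearMap.mulRight k y).ker ≠ ⊥} := by
  classical
  have hq : 1 < Fintype.card k := Fintype.one_lt_card
  have hcard : Fintype.card k ^ n = Fintype.card K := by rw [← hn, ← Module.card_eq_pow_finrank]
  have hpow : 1 < Fintype.card k ^ i.val :=
    Nat.one_lt_pow (fun h => hi0 ((ZMod.val_eq_zero i).mp h)) hq
  have hpow' : Fintype.card k ^ i.val < Fintype.card K := by
    rw [← hcard]; exact Nat.pow_lt_pow_right hq i.val_lt
  simp only [redeiCoeff, hi0, if_false, add_zero] at hi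
  by_contra! hlt
  refine hi (eq_zero_of_natDegree_lt_card_of_eval_eq_zero' _
    (Finset.univ.filter fun y => (f - LinearMap.mulRight k y).ker = ⊥) (fun y hy => ?_) ?_)
  · rw [eval_coeff_redei_of_ker_eq_bot f (Finset.mem_filter.mp hy).2, coeff_sub, coeff_X_pow,
      coeff_X, if_neg hpow'.ne, if_neg hpow.ne, sub_zero]
  · refine (natDegree_coeff_redei_le f _).trans_lt ?_
    have h1 := Finset.card_filter_add_card_filter_not (s := (Finset.univ : Finset K))
      (fun y => (f - LinearMap.mulRight k y).ker = ⊥)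
    rw [Nat.card_eq_fintype_card, Fintype.card_subtype] at hlt
    rw [Finset.card_univ] at h1
    simp only [ne_eq] at hlt
    omega

theorem pow_sub_le_card_directions {n : ℕ} [NeZero n] (hn : Module.finrank k K = n)
    (f : K →ₗ[k] K) {y : K} (hy : (f - LinearMap.mulRight k y).ker ≠ ⊥) :
    Fintype.card k ^ (n - Module.finrank k (f - LinearMap.mulRight k y).ker) ≤
      Nat.card {y : K // (f - LinearMap.mulRight k y).ker ≠ ⊥} := by
  classical
  set h := f - LinearMap.mulRight k y with hh
  have hq : 1 < Fintype.card k := Fintype.one_lt_card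
  set P : K[X] := ∑ i : ZMod n, C ((redeiCoeff n f i).eval y) * X ^ Fintype.card k ^ i.val with hP
  have hcoeff : P.coeff 1 = 1 := by
    simp only [hP, finsetSum_coeff, coeff_C_mul, coeff_X_pow]
    rw [Finset.sum_eq_single 0]
    · rw [redeiCoeff, eval_add, eval_coeff_redei_of_lt]
      · simp
      · rw [ZMod.val_zero, pow_zero]
        refine Nat.one_lt_pow ?_ hq
        rwa [Ne, Submodule.finrank_eq_zero]
    · intro b _ hb
      rw [if_neg, mul_zero]
      exact (Nat.one_lt_pow (fun h => hb ((ZMod.val_eq_zero b).mp h)) hq).ne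
    · simp
  have hP0 : P ≠ 0 := by rintro h; simp [h] at hcoeff
  have hdeg : P.natDegree ≤ Nat.card {y : K // (f - LinearMap.mulRight k y).ker ≠ ⊥} := by
    refine natDegree_sum_le_of_forall_le _ _ fun i _ => ?_
    by_cases hi0 : i = 0
    · refine (natDegree_C_mul_X_pow_le _ _).trans ?_
      rw [hi0, ZMod.val_zero, pow_zero]
      have : Nonempty {y : K // (f - LinearMap.mulRight k y).ker ≠ ⊥} := ⟨⟨y, hy⟩⟩
      exact Nat.card_pos
    · by_cases hi : redeiCoeff n f i = 0
      · simp [hi]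
      · exact (natDegree_C_mul_X_pow_le _ _).trans (pow_val_le_card_directions hn f hi hi0)
  have hroots : ∀ z ∈ (Finset.univ.image h), P.eval z = 0 := by
    intro z hz
    obtain ⟨x, _, rfl⟩ := Finset.mem_image.mp hz
    have h1 := congrArg (fun Q : K[X] => Q.eval y) (sum_redeiCoeff_mul hn f x)
    simp only [eval_finsetSum, eval_mul, eval_pow, eval_sub, eval_C, eval_X, FiniteField.pow_card,
      sub_self, mul_zero] at h1
    simpa [hP, eval_finsetSum, hh] using h1
  have hcardim : (Finset.univ.image h).card = Fintype.card k ^ (n - Module.finrank k h.ker) := by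
    have h1 := h.finrank_range_add_finrank_ker
    have h2 : (Finset.univ.image h).card = Fintype.card h.range := by
      rw [← Set.toFinset_range, Set.toFinset_card]
      exact Fintype.card_congr (Equiv.refl _)
    rw [h2, Module.card_eq_pow_finrank (K := k)]
    congr 1
    omega
  rw [← hcardim]
  refine le_trans ?_ hdeg
  by_contra! hlt
  exact hP0 (eq_zero_of_natDegree_lt_card_of_eval_eq_zero' _ _ hroots hlt)

/-- If every nonzero weight of the graph of `f` is at least `d` and `d` is attained,
then `f` is linear over the subfield with `q ^ d` elements. -/
theorem dvd_finrank_and_map_mul {n : ℕ} [NeZero n] (hn : Module.finrank k K = n) (f : K →ₗ[k] K)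
    {d : ℕ} (hd : ∀ y : K, (f - LinearMap.mulRight k y).ker ≠ ⊥ →
      d ≤ Module.finrank k (f - LinearMap.mulRight k y).ker)
    {y : K} (hy0 : (f - LinearMap.mulRight k y).ker ≠ ⊥)
    (hy : Module.finrank k (f - LinearMap.mulRight k y).ker = d) :
    d ∣ n ∧ ∀ a x : K, a ^ Fintype.card k ^ d = a → f (a * x) = a * f x := by
  classical
  have hq : 1 < Fintype.card k := Fintype.one_lt_card
  have hdn : d ≤ n := by rw [← hy, ← hn]; exact Submodule.finrank_le _
  obtain ⟨c, hc⟩ := exists_eq_sum_frobenius hn f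
  have hg0 : (X ^ Fintype.card K - X : K[X]) ≠ 0 :=
    FiniteField.X_pow_card_sub_X_ne_zero K Fintype.one_lt_card
  obtain ⟨g, hgn, hdg, hg⟩ := exists_dvd_forall_dvd_val hdn {i : ZMod n | c i ≠ 0} (by
    intro i hi0 hid hr
    refine not_reflTransGen_of_vecMul_eq_single hq (ZMod.val_injective n) _ _ hg0
      (redeiCoeff_vecMul hn f hc) (redeiCoeff_eq_zero hn f hd hi0 hid) ?_
    exact hr.lift id fun a b hab => pow_ne_zero _ hab)
  have hlin : ∀ a x : K, a ^ Fintype.card k ^ g = a → f (a * x) = a * f x := by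
    intro a x ha
    have hpow : ∀ m : ℕ, a ^ Fintype.card k ^ (g * m) = a := by
      intro m
      induction m with
      | zero => simp
      | succ m ih => rw [Nat.mul_succ, pow_add, pow_mul, ih, ha]
    rw [hc, hc, Finset.mul_sum]
    refine Finset.sum_congr rfl fun i _ => ?_
    by_cases hi : c i = 0
    · simp [hi]
    · obtain ⟨m, hm⟩ := hg i hi
      rw [mul_pow, hm, hpow]
      ring
  have hgd : g = d := by
    refine le_antisymm ?_ hdg
    obtain ⟨E, hE⟩ := exists_subfield_natCard_eq k K (hn ▸ hgn)
    obtain ⟨z, hz, hz0⟩ := Submodule.exists_mem_ne_zero_of_ne_bot hy0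
    have hker : ∀ a : E, (a : K) * z ∈ (f - LinearMap.mulRight k y).ker := by
      intro a
      have ha : (a : K) ^ Fintype.card k ^ g = a := by
        have : Fintype E := Fintype.ofFinite E
        have := FiniteField.pow_card a
        rw [← Nat.card_eq_fintype_card, hE] at this
        exact_mod_cast congrArg (Subtype.val) this
      have hz' : f z = z * y := by simpa [sub_eq_zero] using hz
      simp [hlin _ z ha, hz', mul_assoc]
    have hle := Nat.card_le_card_of_injective
      (fun a : E => (⟨(a : K) * z, hker a⟩ : (f - LinearMap.mulRight k y).ker)) (by
        intro a b hab
        have := congrArg Subtype.val hab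
        exact Subtype.ext (mul_right_cancel₀ hz0 this))
    rw [hE, Nat.card_eq_fintype_card (α := (f - LinearMap.mulRight k y).ker),
      Module.card_eq_pow_finrank (K := k) (V := (f - LinearMap.mulRight k y).ker), hy] at hle
    exact (Nat.pow_le_pow_iff_right hq).mp hle
  subst hgd
  exact ⟨hgn, hlin⟩

end

section

theorem exists_linearMap_prod_of_ne_zero {K : Type*} [Field K] {w : K × K} (hw : w ≠ 0) :
    ∃ α β : K × K →ₗ[K] K, (∀ v, α v = 0 → ∃ m : K, v = m • w) ∧
      ∀ v, α v = 0 → β v = 0 → v = 0 := by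
  classical
  refine ⟨w.2 • LinearMap.fst K K K - w.1 • LinearMap.snd K K K,
    if w.1 ≠ 0 then LinearMap.fst K K K else LinearMap.snd K K K, fun v hv => ?_, fun v hv hv' => ?_⟩
  · have hv : w.2 * v.1 = w.1 * v.2 := by simpa [sub_eq_zero] using hv
    by_cases h1 : w.1 = 0
    · have h2 : w.2 ≠ 0 := fun h2 => hw (Prod.ext h1 h2)
      have hv1 : v.1 = 0 := by simpa [h1, h2] using hv
      exact ⟨v.2 / w.2, Prod.ext (by simp [h1, hv1]) (by simp [h2])⟩
    · refine ⟨v.1 / w.1, Prod.ext (by simp [h1]) ?_⟩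
      simp only [Prod.smul_snd, smul_eq_mul]
      field_simp
      linear_combination -hv
  · have hv : w.2 * v.1 = w.1 * v.2 := by simpa [sub_eq_zero] using hv
    by_cases h1 : w.1 = 0
    · have h2 : w.2 ≠ 0 := fun h2 => hw (Prod.ext h1 h2)
      have hv1 : v.1 = 0 := by simpa [h1, h2] using hv
      exact Prod.ext hv1 (by simpa [h1] using hv')
    · have hv1 : v.1 = 0 := by simpa [h1] using hv'
      exact Prod.ext hv1 (by simpa [hv1, h1] using hv.symm)

theorem exists_ne_zero_forall_smul_mem_imp_eq_zero {K : Type*} [Field K] [Finite K]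
    (S : Set (K × K)) (hS : Nat.card S ≤ Nat.card K) :
    ∃ w : K × K, w ≠ 0 ∧ ∀ m : K, m • w ∈ S → m • w = 0 := by
  by_contra! h
  let r : Option K → K × K := fun o => o.elim (0, 1) fun m => (1, m)
  have hr : ∀ o, r o ≠ 0 := by rintro (_ | m) h <;> simp [r] at h
  choose m hm hm0 using fun o => h (r o) (hr o)
  have hmz : ∀ o, m o ≠ 0 := fun o h => hm0 o (by simp [h])
  have hinj : Function.Injective fun o => (⟨m o • r o, hm o⟩ : S) := by
    intro a b hab
    have hab : m a • r a = m b • r b := congrArg Subtype.val hab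
    have h1 := congrArg Prod.fst hab
    have h2 := congrArg Prod.snd hab
    rcases a with _ | a <;> rcases b with _ | b <;> simp [r, hmz] at h1 h2
    · rfl
    · exact absurd h1.symm (hmz _)
    · rw [h1] at h2
      exact congrArg some (mul_left_cancel₀ (hmz _) h2)
  have hle := (Nat.card_le_card_of_injective _ hinj).trans hS
  rw [Finite.card_option] at hle
  omega

theorem finrank_ker_eq_finrank_span_inf {k K : Type*} [Field k] [Field K] [Algebra k K]
    {α β : K × K →ₗ[K] K} (hαβ : ∀ v, α v = 0 → β v = 0 → v = 0) (U : Submodule k (K × K))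
    (e : U ≃ₗ[k] K) (he : ∀ u : U, e u = α u) {v : K × K} (hv : v ∈ U) (hv0 : v ≠ 0) {y : K}
    (hy : β v = α v * y) :
    (β.restrictScalars k ∘ₗ U.subtype ∘ₗ e.symm.toLinearMap - LinearMap.mulRight k y).ker ≠ ⊥ ∧
    Module.finrank k
        (β.restrictScalars k ∘ₗ U.subtype ∘ₗ e.symm.toLinearMap - LinearMap.mulRight k y).ker =
      Module.finrank k ↥((Submodule.span K {v}).restrictScalars k ⊓ U) := by
  set f := β.restrictScalars k ∘ₗ U.subtype ∘ₗ e.symm.toLinearMap with hf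
  have hker : ∀ x, x ∈ (f - LinearMap.mulRight k y).ker ↔
      β (e.symm x : K × K) = α (e.symm x : K × K) * y := by
    intro x
    rw [← he, e.apply_symm_apply]
    simp [hf, sub_eq_zero]
  have hα0 : α v ≠ 0 := fun h => hv0 (hαβ v h (by rw [hy, h, zero_mul]))
  have hspan : ∀ u : K × K, u ∈ Submodule.span K {v} ↔ β u = α u * y := by
    intro u
    rw [Submodule.mem_span_singleton]
    constructor
    · rintro ⟨a, rfl⟩
      simp [hy, mul_assoc]
    · intro hu
      refine ⟨α u / α v, ?_⟩
      rw [← sub_eq_zero]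
      apply hαβ
      · simp [hα0]
      · simp only [map_sub, map_smul, smul_eq_mul, hy, hu]
        field_simp
        ring
  have hinj : Function.Injective (U.subtype ∘ₗ e.symm.toLinearMap) :=
    U.injective_subtype.comp e.symm.injective
  have hmap : (f - LinearMap.mulRight k y).ker.map (U.subtype ∘ₗ e.symm.toLinearMap) =
      (Submodule.span K {v}).restrictScalars k ⊓ U := by
    ext u
    simp only [Submodule.mem_map, Submodule.mem_inf, Submodule.restrictScalars_mem, hspan, hker]
    constructor
    · rintro ⟨x, hx, rfl⟩
      exact ⟨hx, (e.symm x).2⟩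
    · rintro ⟨hu, huU⟩
      exact ⟨e ⟨u, huU⟩, by simpa using hu, by simp⟩
  refine ⟨?_, ?_⟩
  · rw [Submodule.ne_bot_iff]
    refine ⟨e ⟨v, hv⟩, (hker _).mpr (by simpa using hy), ?_⟩
    rw [he]
    exact hα0
  · rw [← hmap]
    exact (Submodule.equivMapOfInjective _ hinj _).finrank_eq

/-- An `E`-subspace meeting the lines of all slopes in `D` has at least `#D * (#E - 1)` nonzero
vectors. -/
theorem natCard_mul_natCard_sub_one_le {K : Type*} [Field K] [Finite K]
    {α β : K × K →ₗ[K] K} (hαβ : ∀ v, α v = 0 → β v = 0 → v = 0) (E : Subfield K)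
    (V : Submodule E (K × K)) (D : Set K)
    (hD : ∀ y : D, ∃ u ∈ V, u ≠ 0 ∧ β u = α u * y) :
    Nat.card D * (Nat.card E - 1) ≤ Nat.card V - 1 := by
  have hcard : ∀ (M : Type _) [Zero M] [Finite M], Nat.card {a : M // a ≠ 0} = Nat.card M - 1 := by
    classical
    intro M _ _
    have := Nat.card_congr (Equiv.optionSubtypeNe (0 : M))
    rw [Finite.card_option] at this
    omega
  choose u hu hu0 hy using hD
  have hα0 : ∀ y, α (u y) ≠ 0 := fun y h => hu0 y (hαβ _ h (by rw [hy, h, zero_mul]))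
  rw [← hcard V, ← hcard E, ← Nat.card_prod]
  refine Nat.card_le_card_of_injective (fun z : D × {a : E // a ≠ 0} =>
    (⟨z.2.1 • ⟨u z.1, hu z.1⟩, smul_ne_zero z.2.2 (by simpa using hu0 z.1)⟩ : {v : V // v ≠ 0})) ?_
  rintro ⟨y, a, ha⟩ ⟨y', a', ha'⟩ h
  have h : (a : K) • u y = (a' : K) • u y' := congrArg (fun v => (v.1 : K × K)) h
  have h1 := congrArg α h
  have h2 := congrArg β h
  simp only [map_smul, smul_eq_mul, hy] at h1 h2
  have ha0 : (a : K) ≠ 0 := by simpa using ha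
  rw [← mul_assoc, ← mul_assoc, ← h1] at h2
  have hyy : y = y' := Subtype.ext (mul_left_cancel₀ (mul_ne_zero ha0 (hα0 y)) h2)
  subst hyy
  have haa : a = a' := Subtype.ext (mul_right_cancel₀ (hα0 y) h1)
  subst haa
  rfl

end

/-- for a rank-`n` `F_q`-subspace `U` of `W = F_{q^n} × F_{q^n}`, if `d` is
the minimum weight of the points of `L_U`, then `d ∣ n` and the maximum field of
linearity of `L_U` is `F_{q^d}`: `L_U` is an `F_{q^d}`-linear set, and it is not an
`F_{q^{e'}}`-linear set for any `e' > d`. -/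
theorem stmt_13 (p e n q : ℕ) (hp : p.Prime) (he : 0 < e) (hn : 0 < n) (hq : q = p ^ e)
    (F : Type) [Field F] [Fintype F] (hF : Fintype.card F = q ^ n)
    (Fq : Subfield F) (hFq : Nat.card Fq = q)
    (U : Submodule Fq (F × F)) (hU0 : U ≠ ⊥) (hU : Module.finrank Fq U = n)
    (d : ℕ)
    (hd : d = sInf {w : ℕ | ∃ v : F × F, v ∈ U ∧ v ≠ 0 ∧
      w = Module.finrank Fq ↥((Submodule.span F {v}).restrictScalars Fq ⊓ U)}) :
    d ∣ n ∧
    (∃ E : Subfield F, Nat.card E = q ^ d ∧ ∃ U' : Submodule E (F × F),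
      linSet F (U' : Set (F × F)) = linSet F (U : Set (F × F))) ∧
    (∀ e' : ℕ, d < e' → ∀ E : Subfield F, Nat.card E = q ^ e' →
      ∀ U'' : Submodule E (F × F),
        linSet F (U'' : Set (F × F)) ≠ linSet F (U : Set (F × F))) := by
  have : Fintype Fq := Fintype.ofFinite Fq
  have : NeZero n := ⟨hn.ne'⟩
  have hcq : Fintype.card Fq = q := by rw [← Nat.card_eq_fintype_card, hFq]
  have hq1 : 1 < q := hcq ▸ Fintype.one_lt_card
  have hfin : Module.finrank Fq F = n := by
    have h := Module.card_eq_pow_finrank (K := Fq) (V := F)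
    rw [hF, hcq] at h
    exact (Nat.pow_right_injective hq1 h).symm
  have hcU : Nat.card U = Nat.card F := by
    have : Fintype U := Fintype.ofFinite U
    rw [Nat.card_eq_fintype_card, Nat.card_eq_fintype_card, hF,
      Module.card_eq_pow_finrank (K := Fq) (V := U), hU, hcq]
  obtain ⟨w, hw0, hw⟩ := exists_ne_zero_forall_smul_mem_imp_eq_zero (U : Set (F × F)) hcU.le
  obtain ⟨α, β, hα, hαβ⟩ := exists_linearMap_prod_of_ne_zero hw0
  have hαU : ∀ v ∈ U, α v = 0 → v = 0 := by
    intro v hv h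
    obtain ⟨m, rfl⟩ := hα v h
    exact hw m hv
  have hinj : Function.Injective (α.restrictScalars Fq ∘ₗ U.subtype) := by
    rw [injective_iff_map_eq_zero]
    exact fun u hu => Subtype.ext (hαU u u.2 hu)
  let ε : U ≃ₗ[Fq] F := LinearEquiv.ofInjectiveOfFinrankEq _ hinj (hU.trans hfin.symm)
  have hε : ∀ u : U, ε u = α u := fun u => rfl
  set f := β.restrictScalars Fq ∘ₗ U.subtype ∘ₗ ε.symm.toLinearMap with hf
  have hweight : ∀ v ∈ U, v ≠ 0 → ∀ y, β v = α v * y →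
      (f - LinearMap.mulRight Fq y).ker ≠ ⊥ ∧
      Module.finrank Fq (f - LinearMap.mulRight Fq y).ker =
        Module.finrank Fq ↥((Submodule.span F {v}).restrictScalars Fq ⊓ U) :=
    fun v hv hv0 y hy => finrank_ker_eq_finrank_span_inf hαβ U ε hε hv hv0 hy
  have hdir : ∀ y, (f - LinearMap.mulRight Fq y).ker ≠ ⊥ →
      ∃ v ∈ U, v ≠ 0 ∧ β v = α v * y := by
    intro y hy
    obtain ⟨x, hx, hx0⟩ := Submodule.exists_mem_ne_zero_of_ne_bot hy
    refine ⟨ε.symm x, (ε.symm x).2, by simpa using hx0, ?_⟩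
    rw [← hε, ε.apply_symm_apply]
    simpa [hf, sub_eq_zero] using hx
  have hslope : ∀ v ∈ U, v ≠ 0 → β v = α v * (β v / α v) := fun v hv hv0 =>
    (mul_div_cancel₀ _ fun h => hv0 (hαU v hv h)).symm
  obtain ⟨v₀, hv₀, hv₀0, hdv₀⟩ : ∃ v : F × F, v ∈ U ∧ v ≠ 0 ∧
      d = Module.finrank Fq ↥((Submodule.span F {v}).restrictScalars Fq ⊓ U) := by
    obtain ⟨v, hv, hv0⟩ := Submodule.exists_mem_ne_zero_of_ne_bot hU0
    have := Nat.sInf_mem (s := {w : ℕ | ∃ v : F × F, v ∈ U ∧ v ≠ 0 ∧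
      w = Module.finrank Fq ↥((Submodule.span F {v}).restrictScalars Fq ⊓ U)})
      ⟨_, v, hv, hv0, rfl⟩
    rwa [← hd] at this
  obtain ⟨hker, hfr⟩ := hweight v₀ hv₀ hv₀0 _ (hslope v₀ hv₀ hv₀0)
  rw [← hdv₀] at hfr
  have hmin : ∀ y : F, (f - LinearMap.mulRight Fq y).ker ≠ ⊥ →
      d ≤ Module.finrank Fq (f - LinearMap.mulRight Fq y).ker := by
    intro y hy
    obtain ⟨v, hv, hv0, hvy⟩ := hdir y hy
    rw [(hweight v hv hv0 y hvy).2, hd]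
    exact Nat.sInf_le ⟨v, hv, hv0, rfl⟩
  obtain ⟨hdn, hlin⟩ := dvd_finrank_and_map_mul hfin f hmin hker hfr
  have hN := pow_sub_le_card_directions hfin f hker
  rw [hfr, hcq] at hN
  rw [hcq] at hlin
  refine ⟨hdn, ?_, ?_⟩
  · obtain ⟨E, hE⟩ := exists_subfield_natCard_eq Fq F (hfin ▸ hdn)
    rw [hcq] at hE
    refine ⟨E, hE, ⟨U.toAddSubmonoid, ?_⟩, rfl⟩
    intro a v hv
    have ha : (a : F) ^ q ^ d = a := by
      have : Fintype E := Fintype.ofFinite E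
      have := FiniteField.pow_card a
      rw [← Nat.card_eq_fintype_card, hE] at this
      exact_mod_cast congrArg Subtype.val this
    have h1 := hlin a (α v) ha
    have hfv : ∀ v (hv : v ∈ U), f (α v) = β v := by
      intro v hv
      rw [show α v = ε ⟨v, hv⟩ from rfl]
      simp [hf]
    have hmem : (ε.symm (a * α v) : F × F) ∈ U := (ε.symm (a * α v)).2
    have hαs : α (ε.symm (a * α v) : F × F) = a * α v := by
      rw [← hε, ε.apply_symm_apply]
    have heq : a • v = (ε.symm (a * α v) : F × F) := by
      rw [← sub_eq_zero]
      change (a : F) • v - _ = 0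
      apply hαβ
      · simp [hαs]
      · rw [map_sub, ← hfv _ hmem, hαs, h1, hfv v hv]
        simp
    change a • v ∈ U
    rw [heq]
    exact hmem
  · intro e' hde E hE V hV
    have hVU : ∀ v ∈ V, v ≠ 0 → ∃ u ∈ U, u ≠ 0 ∧ ∃ c : F, v = c • u := by
      intro v hv hv0
      have : Submodule.span F {v} ∈ linSet F (U : Set (F × F)) := hV ▸ ⟨v, hv, hv0, rfl⟩
      obtain ⟨u, hu, hu0, h⟩ := this
      obtain ⟨c, hc⟩ := Submodule.mem_span_singleton.mp (h ▸ Submodule.mem_span_singleton_self v)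
      exact ⟨u, hu, hu0, c, hc.symm⟩
    have hUV : ∀ u ∈ U, u ≠ 0 → ∃ v ∈ V, v ≠ 0 ∧ ∃ c : F, v = c • u := by
      intro u hu hu0
      have : Submodule.span F {u} ∈ linSet F (V : Set (F × F)) := hV ▸ ⟨u, hu, hu0, rfl⟩
      obtain ⟨v, hv, hv0, h⟩ := this
      obtain ⟨c, hc⟩ := Submodule.mem_span_singleton.mp (h ▸ Submodule.mem_span_singleton_self v)
      exact ⟨v, hv, hv0, c, hc.symm⟩
    have hVα : ∀ v ∈ V, α v = 0 → v = 0 := by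
      intro v hv h
      by_contra hv0
      obtain ⟨u, hu, hu0, c, rfl⟩ := hVU v hv hv0
      have hc : c ≠ 0 := by rintro rfl; simp at hv0
      have hu : α u = 0 := by simpa [hc] using h
      exact hu0 (hαU u ‹_› hu)
    have hcV : Nat.card V ≤ q ^ n := by
      rw [← hF, ← Nat.card_eq_fintype_card]
      refine Nat.card_le_card_of_injective (fun v : V => α v) fun v v' h => ?_
      refine Subtype.ext (sub_eq_zero.mp (hVα _ (V.sub_mem v.2 v'.2) ?_))
      rw [map_sub, sub_eq_zero]
      exact h
    have hle := natCard_mul_natCard_sub_one_le hαβ E V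
      {y | (f - LinearMap.mulRight Fq y).ker ≠ ⊥} (by
        rintro ⟨y, hy⟩
        obtain ⟨u, hu, hu0, huy⟩ := hdir y hy
        obtain ⟨v, hv, hv0, c, rfl⟩ := hUV u hu hu0
        exact ⟨_, hv, hv0, by simp [huy, mul_assoc]⟩)
    rw [hE] at hle
    have hpow : q * q ^ d ≤ q ^ e' := by
      rw [← pow_succ']
      exact Nat.pow_le_pow_right hq1.le hde
    have hsplit : q ^ (n - d) * q ^ d = q ^ n := by
      rw [← pow_add, Nat.sub_add_cancel (Nat.le_of_dvd hn hdn)]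
    have hpos : 0 < q ^ d := Nat.pow_pos (by omega)
    have hstep : q ^ (n - d) * q ^ d ≤ Nat.card {y | (f - LinearMap.mulRight Fq y).ker ≠ ⊥} *
        (q ^ e' - 1) := by
      refine Nat.mul_le_mul hN ?_
      have : 2 * q ^ d ≤ q * q ^ d := Nat.mul_le_mul_right _ hq1
      omega
    have : 0 < q ^ n := Nat.pow_pos (by omega)
    omega
end
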